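/- arXiv:1612.04861 — 2 statements merged into one kernel-verified Lean document; each statement's English description precedes it below -/
import Mathlib

section
/- Let P and Q be finite sets of points in the plane (possibly containing collinear triples), each of cardinality n, each not contained in a line, such that P has exactly one internal point and Q has exactly one internal point. Then there exist a triangulation T_P of P and a triangulation T_Q of Q that are compatible; moreover compatible triangulations are obtained by joining the internal point of each set to all convex hull points of that set. -/
open Set

/-- Points of the plane. -/
abbrev Pt : Type := ℝ × ℝ

noncomputable section

/-- The determinant of two plane vectors. -/
def det2 (u v : Pt) : ℝ := u.1 * v.2 - u.2 * v.1

/-- A triple `(a,b,c)` of points is clockwise-ordered if `det (b-a, c-a) < 0`. -/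
def Clockwise (a b c : Pt) : Prop := det2 (b - a) (c - a) < 0

/-- The closed segments `[a,b]` and `[c,d]` cross: they intersect in a point that is not a
common endpoint of the two segments. -/
def Crosses (a b c d : Pt) : Prop :=
  ∃ x : Pt, x ∈ segment ℝ a b ∧ x ∈ segment ℝ c d ∧
    ¬((x = a ∨ x = b) ∧ (x = c ∨ x = d))

/-- `T` is a set of unordered pairs of distinct points of `P` whose corresponding
segments are pairwise non-crossing. -/
def ValidSegs (P : Finset Pt) (T : Set (Sym2 Pt)) : Prop :=
  (∀ e ∈ T, ∃ a b : Pt, a ∈ P ∧ b ∈ P ∧ a ≠ b ∧ e = s(a, b)) ∧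
  (∀ a b c d : Pt, s(a, b) ∈ T → s(c, d) ∈ T → s(a, b) ≠ s(c, d) → ¬ Crosses a b c d)

/-- A triangulation of `P`: a maximal (w.r.t. inclusion) set of unordered pairs of distinct
points of `P`, no two of whose segments cross. -/
def IsTriangulation (P : Finset Pt) (T : Set (Sym2 Pt)) : Prop :=
  ValidSegs P T ∧ ∀ T' : Set (Sym2 Pt), ValidSegs P T' → T ⊆ T' → T' = T

/-- A convex hull point of `P`: a point of `P` on the boundary of `conv P`. -/
def HullPoint (P : Finset Pt) (p : Pt) : Prop :=
  p ∈ P ∧ p ∈ frontier (convexHull ℝ (P : Set Pt))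

/-- An internal point of `P`: a point of `P` in the interior of `conv P`. -/
def InternalPoint (P : Finset Pt) (p : Pt) : Prop :=
  p ∈ P ∧ p ∈ interior (convexHull ℝ (P : Set Pt))

/-- The number of convex hull points of `P`. -/
def hullCount (P : Finset Pt) : ℕ := {p : Pt | HullPoint P p}.ncard

/-- The number of internal points of `P`. -/
def internalCount (P : Finset Pt) : ℕ := {p : Pt | InternalPoint P p}.ncard

/-- The open triangle with vertices `a`, `b`, `c`. -/
def openTriangle (a b c : Pt) : Set Pt := interior (convexHull ℝ ({a, b, c} : Set Pt))

/-- `(a,b,c)` is a triangle of the triangulation `T` of `P`: the three points are distinct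
points of `P`, the three pairs are in `T`, and the open triangle `abc` contains no point of
`P` and meets no segment of `T`. -/
def IsTriangleOf (P : Finset Pt) (T : Set (Sym2 Pt)) (a b c : Pt) : Prop :=
  a ∈ P ∧ b ∈ P ∧ c ∈ P ∧ a ≠ b ∧ b ≠ c ∧ a ≠ c ∧
  s(a, b) ∈ T ∧ s(b, c) ∈ T ∧ s(a, c) ∈ T ∧
  (∀ p ∈ P, p ∉ openTriangle a b c) ∧
  (∀ u v : Pt, s(u, v) ∈ T → ∀ x ∈ segment ℝ u v, x ∉ openTriangle a b c)

/-- Triangulations `TP` of `P` and `TQ` of `Q` are compatible via the bijection `φ : P → Q`: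
`(a,b,c)` is a clockwise-ordered triangle of `TP` iff `(φ a, φ b, φ c)` is a
clockwise-ordered triangle of `TQ`. -/
def CompatibleVia (P Q : Finset Pt) (TP TQ : Set (Sym2 Pt)) (φ : Pt → Pt) : Prop :=
  Set.BijOn φ (P : Set Pt) (Q : Set Pt) ∧
  ∀ a b c : Pt, a ∈ P → b ∈ P → c ∈ P →
    ((IsTriangleOf P TP a b c ∧ Clockwise a b c) ↔
     (IsTriangleOf Q TQ (φ a) (φ b) (φ c) ∧ Clockwise (φ a) (φ b) (φ c)))

/-- Triangulations `TP` of `P` and `TQ` of `Q` are compatible. -/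
def Compatible (P Q : Finset Pt) (TP TQ : Set (Sym2 Pt)) : Prop :=
  ∃ φ : Pt → Pt, CompatibleVia P Q TP TQ φ

/-- The degree of a point `p` in a triangulation `T`: the number of pairs of `T`
containing `p`. -/
def degreeIn (T : Set (Sym2 Pt)) (p : Pt) : ℕ := {e ∈ T | p ∈ e}.ncard

/-- `P` is in general position: no three points of `P` are collinear. -/
def GenPos (P : Finset Pt) : Prop :=
  ∀ a b c : Pt, a ∈ P → b ∈ P → c ∈ P → a ≠ b → b ≠ c → a ≠ c →
    ¬ Collinear ℝ ({a, b, c} : Set Pt)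

end

/-- Determinant relative to a base point. -/
def DD (p a b : Pt) : ℝ := (a.1 - p.1) * (b.2 - p.2) - (a.2 - p.2) * (b.1 - p.1)

/-- The properties of the hull points `H` seen from the internal point `p`. -/
structure StarSet (H : Finset Pt) (p : Pt) : Prop where
  np : p ∉ H
  ray : ∀ a ∈ H, ∀ b ∈ H, ∀ t : ℝ, 0 < t → a - p = t • (b - p) → a = b
  ex : ∀ a ∈ H, ∃ b ∈ H, 0 < DD p a b
  out : ∀ a ∈ H, ∀ b ∈ H, ∀ c ∈ H, 0 < DD p a c → 0 < DD p c b → 0 < DD p a b →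
    DD p a b ≤ DD p a c + DD p c b

/-- `b` is the counterclockwise successor of `a`. -/
def Nxt (H : Finset Pt) (p a b : Pt) : Prop :=
  a ∈ H ∧ b ∈ H ∧ 0 < DD p a b ∧ ∀ c ∈ H, ¬ (0 < DD p a c ∧ 0 < DD p c b)

/-- The wheel. -/
def Wheel (H : Finset Pt) (p : Pt) : Set (Sym2 Pt) :=
  {e | (∃ h ∈ H, e = s(p, h)) ∨ ∃ a b, Nxt H p a b ∧ e = s(a, b)}

lemma DD_neg (p a b : Pt) : DD p a b = - DD p b a := by unfold DD; ring

lemma DD_self (p a : Pt) : DD p a a = 0 := by unfold DD; ring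

lemma DD_base (p a : Pt) : DD p p a = 0 := by unfold DD; ring

lemma DD_comb (p u a b : Pt) (s t : ℝ) (h : s + t = 1) :
    DD p u (s • a + t • b) = s * DD p u a + t * DD p u b := by
  obtain rfl : s = 1 - t := by linarith
  simp [DD]; ring

lemma DD_comb' (p u a b : Pt) (s t : ℝ) (h : s + t = 1) :
    DD p (s • a + t • b) u = s * DD p a u + t * DD p b u := by
  rw [DD_neg, DD_comb _ _ _ _ _ _ h, DD_neg p a, DD_neg p b]; ring

lemma DD_plucker (p a c x b : Pt) :
    DD p a x * DD p c b = DD p a c * DD p x b + DD p a b * DD p c x := by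
  unfold DD; ring

lemma half_plane {S : Set Pt} {z u v : Pt} (hz : z ∈ interior S) (huv : u ≠ v)
    (h : ∀ x ∈ S, 0 ≤ DD u v x) : 0 < DD u v z := by
  have hcont : Filter.Tendsto (fun e : ℝ => z - e • ((-(v.2 - u.2), v.1 - u.1) : Pt))
      (nhds 0) (nhds z) := by
    have : Continuous (fun e : ℝ => z - e • ((-(v.2 - u.2), v.1 - u.1) : Pt)) := by fun_prop
    simpa using this.tendsto 0
  have h1 := hcont.eventually (mem_interior_iff_mem_nhds.mp hz)
  have h2 : ∀ᶠ e : ℝ in nhdsWithin 0 (Ioi 0),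
      (z - e • ((-(v.2 - u.2), v.1 - u.1) : Pt)) ∈ S := h1.filter_mono nhdsWithin_le_nhds
  obtain ⟨e, he, he0⟩ := (h2.and self_mem_nhdsWithin).exists
  have he0 : (0:ℝ) < e := he0
  have h3 := h _ he
  have h4 : 0 < (v.1 - u.1)^2 + (v.2 - u.2)^2 := by
    by_contra hc
    have a1 : (v.1 - u.1)^2 = 0 := by nlinarith [sq_nonneg (v.1 - u.1), sq_nonneg (v.2 - u.2)]
    have a2 : (v.2 - u.2)^2 = 0 := by nlinarith [sq_nonneg (v.1 - u.1), sq_nonneg (v.2 - u.2)]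
    apply huv
    have := pow_eq_zero_iff (two_ne_zero) |>.mp a1
    have := pow_eq_zero_iff (two_ne_zero) |>.mp a2
    ext <;> linarith
  have h5 : DD u v z = DD u v (z - e • ((-(v.2 - u.2), v.1 - u.1) : Pt))
      + e * ((v.1 - u.1)^2 + (v.2 - u.2)^2) := by
    simp [DD]; ring
  have := mul_pos he0 h4
  linarith

lemma half_hull {S : Set Pt} {u v : Pt} (h : ∀ x ∈ S, 0 ≤ DD u v x) :
    ∀ x ∈ convexHull ℝ S, 0 ≤ DD u v x := by
  have hc : Convex ℝ {x : Pt | 0 ≤ DD u v x} := by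
    intro x hx y hy s t hs ht hst
    simp only [mem_ofPred_eq] at *
    rw [DD_comb _ _ _ _ _ _ hst]; positivity
  exact fun x hx => convexHull_min (t := {x : Pt | 0 ≤ DD u v x}) h hc hx

lemma star_of (P : Finset Pt) (p : Pt) (hsing : {x : Pt | InternalPoint P x} = {p}) :
    StarSet (P.erase p) p := by
  have hp : InternalPoint P p := by
    have : p ∈ {x : Pt | InternalPoint P x} := by rw [hsing]; rfl
    exact this
  have hnot : ∀ h ∈ P.erase p, h ∉ interior (convexHull ℝ (P : Set Pt)) := by
    intro h hh hi
    have : h ∈ {x : Pt | InternalPoint P x} := ⟨Finset.mem_of_mem_erase hh, hi⟩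
    rw [hsing] at this
    exact (Finset.ne_of_mem_erase hh) this
  have key : ∀ h ∈ P.erase p, ∀ y ∈ convexHull ℝ (P : Set Pt), ∀ s : ℝ, 0 ≤ s → s < 1 →
      h - p = s • (y - p) → False := by
    intro h hh y hy s hs0 hs1 he
    apply hnot h hh
    have := (convex_convexHull ℝ (P : Set Pt)).combo_interior_self_mem_interior hp.2 hy
      (a := 1 - s) (b := s) (by linarith) hs0 (by ring)
    convert this using 1
    have : h = p + s • (y - p) := by rw [← he]; abel
    rw [this]; module
  have hsub : ∀ a ∈ P.erase p, a ∈ convexHull ℝ (P : Set Pt) := fun a ha =>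
    subset_convexHull ℝ _ (Finset.mem_of_mem_erase ha)
  refine ⟨Finset.notMem_erase _ _, ?_, ?_, ?_⟩
  · intro a ha b hb t ht he
    rcases lt_trichotomy t 1 with h | h | h
    · exact (key a ha b (hsub b hb) t ht.le h he).elim
    · subst h; simpa using he
    · refine (key b hb a (hsub a ha) t⁻¹ (by positivity) (inv_lt_one_of_one_lt₀ h) ?_).elim
      rw [he, smul_smul, inv_mul_cancel₀ ht.ne', one_smul]
  · intro a ha
    by_contra hc
    push Not at hc
    have hne : a ≠ p := Finset.ne_of_mem_erase ha
    have h1 : ∀ x ∈ convexHull ℝ (P : Set Pt), 0 ≤ DD a p x := by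
      apply half_hull
      intro x hx
      have e : DD a p x = - DD p a x := by unfold DD; ring
      rw [e]
      by_cases hxp : x = p
      · subst hxp; simp [DD]
      · have := hc x (Finset.mem_erase.mpr ⟨hxp, hx⟩); linarith
    have := half_plane hp.2 hne h1
    rw [DD_self] at this
    exact lt_irrefl _ this
  · intro a ha b hb c hc h1 h2 h3
    by_contra hlt
    push Not at hlt
    have hs : 0 < DD p a c + DD p c b := by linarith
    refine key c hc ((DD p c b / (DD p a c + DD p c b)) • a + (DD p a c / (DD p a c + DD p c b)) • b)
      ((convex_convexHull ℝ (P : Set Pt)) (hsub a ha) (hsub b hb) (by positivity) (by positivity)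
      (by field_simp; ring)) ((DD p a c + DD p c b) / DD p a b) (by positivity)
      ((div_lt_one h3).mpr hlt) ?_
    have e1 : (DD p a c + DD p c b) * (c.1 - p.1) * DD p a b = (DD p a c + DD p c b) *
      (DD p c b * (a.1 - p.1) + DD p a c * (b.1 - p.1)) := by unfold DD; ring
    have e2 : (DD p a c + DD p c b) * (c.2 - p.2) * DD p a b = (DD p a c + DD p c b) *
      (DD p c b * (a.2 - p.2) + DD p a c * (b.2 - p.2)) := by unfold DD; ring
    ext
    · simp only [Prod.fst_sub, Prod.smul_fst, Prod.fst_add, smul_eq_mul]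
      field_simp
      have := mul_left_cancel₀ hs.ne' (by linarith [e1] : (DD p a c + DD p c b) * ((c.1 - p.1) * DD p a b) = (DD p a c + DD p c b) *
        (DD p c b * (a.1 - p.1) + DD p a c * (b.1 - p.1)))
      linarith
    · simp only [Prod.snd_sub, Prod.smul_snd, Prod.snd_add, smul_eq_mul]
      field_simp
      have := mul_left_cancel₀ hs.ne' (by linarith [e2] : (DD p a c + DD p c b) * ((c.2 - p.2) * DD p a b) = (DD p a c + DD p c b) *
        (DD p c b * (a.2 - p.2) + DD p a c * (b.2 - p.2)))
      linarith

lemma StarSet.ray' {H : Finset Pt} {p : Pt} (S : StarSet H p) {a b x : Pt} (ha : a ∈ H) (hb : b ∈ H)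
    (h0 : DD p a b = 0) (h1 : 0 < DD p a x) (h2 : 0 < DD p b x) : a = b := by
  apply S.ray a ha b hb (DD p a x / DD p b x) (by positivity)
  ext
  · simp only [Prod.fst_sub, Prod.smul_fst, smul_eq_mul]
    field_simp
    have : (a.1 - p.1) * DD p b x - DD p a x * (b.1 - p.1) = - DD p a b * (x.1 - p.1) := by
      unfold DD; ring
    rw [h0] at this; linarith
  · simp only [Prod.snd_sub, Prod.smul_snd, smul_eq_mul]
    field_simp
    have : (a.2 - p.2) * DD p b x - DD p a x * (b.2 - p.2) = - DD p a b * (x.2 - p.2) := by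
      unfold DD; ring
    rw [h0] at this; linarith

lemma StarSet.ray'' {H : Finset Pt} {p : Pt} (S : StarSet H p) {a b x : Pt} (ha : a ∈ H) (hb : b ∈ H)
    (h0 : DD p a b = 0) (h1 : 0 < DD p x a) (h2 : 0 < DD p x b) : a = b := by
  apply S.ray a ha b hb (DD p x a / DD p x b) (by positivity)
  ext
  · simp only [Prod.fst_sub, Prod.smul_fst, smul_eq_mul]
    field_simp
    have : (a.1 - p.1) * DD p x b - DD p x a * (b.1 - p.1) = DD p a b * (x.1 - p.1) := by
      unfold DD; ring
    rw [h0] at this; linarith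
  · simp only [Prod.snd_sub, Prod.smul_snd, smul_eq_mul]
    field_simp
    have : (a.2 - p.2) * DD p x b - DD p x a * (b.2 - p.2) = DD p a b * (x.2 - p.2) := by
      unfold DD; ring
    rw [h0] at this; linarith

/-- Two successor cones sharing a point coincide. -/
lemma cone_uniq {H : Finset Pt} {p : Pt} (S : StarSet H p) {a b c d x : Pt}
    (hab : Nxt H p a b) (hcd : Nxt H p c d) (h1 : 0 < DD p a x) (h2 : 0 < DD p x b)
    (h3 : 0 < DD p c x) (h4 : 0 < DD p x d) : a = c ∧ b = d := by
  obtain ⟨ha, hb, hD, hn⟩ := hab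
  obtain ⟨hc, hd, hD', hn'⟩ := hcd
  constructor
  · rcases lt_trichotomy (DD p a c) 0 with h | h | h
    · have h' : 0 < DD p c a := by rw [DD_neg]; linarith
      have e := DD_plucker p c a x d
      have := hn' a ha
      have h5 : ¬ 0 < DD p a d := fun h => this ⟨h', h⟩
      nlinarith [mul_pos h' h4, mul_pos hD' h1]
    · exact S.ray' ha hc h h1 h3
    · have e := DD_plucker p a c x b
      have := hn c hc
      have h5 : ¬ 0 < DD p c b := fun h' => this ⟨h, h'⟩
      nlinarith [mul_pos h h2, mul_pos hD h3]
  · rcases lt_trichotomy (DD p b d) 0 with h | h | h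
    · have h' : 0 < DD p d b := by rw [DD_neg]; linarith
      have e := DD_plucker p a x d b
      have := hn d hd
      have h5 : ¬ 0 < DD p a d := fun h => this ⟨h, h'⟩
      nlinarith [mul_pos h1 h', mul_pos hD h4]
    · exact S.ray'' hb hd h h2 h4
    · have e := DD_plucker p c x b d
      have := hn' b hb
      have h5 : ¬ 0 < DD p c b := fun h' => this ⟨h', h⟩
      nlinarith [mul_pos h3 h, mul_pos hD' h2]

lemma seg_cases {H : Finset Pt} {p a b x : Pt} (hab : Nxt H p a b) (hx : x ∈ segment ℝ a b) :
    x = a ∨ x = b ∨ (0 < DD p a x ∧ 0 < DD p x b ∧ DD p a x + DD p x b = DD p a b) := by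
  obtain ⟨s, t, hs, ht, hst, rfl⟩ := hx
  rcases hs.eq_or_lt with rfl | hs
  · right; left
    obtain rfl : t = 1 := by linarith
    simp
  rcases ht.eq_or_lt with rfl | ht
  · left
    obtain rfl : s = 1 := by linarith
    simp
  right; right
  rw [DD_comb _ _ _ _ _ _ hst, DD_comb' _ _ _ _ _ _ hst, DD_self, DD_self]
  have := hab.2.2.1
  refine ⟨by simpa using mul_pos ht this, by simpa using mul_pos hs this, ?_⟩
  linear_combination (DD p a b) * hst

lemma spoke_pos {p h u x : Pt} (hx : x ∈ segment ℝ p h) :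
    ∃ s : ℝ, 0 ≤ s ∧ x - p = s • (h - p) ∧ DD p u x = s * DD p u h ∧ DD p x u = s * DD p h u := by
  obtain ⟨s, t, hs, ht, hst, rfl⟩ := hx
  refine ⟨t, ht, ?_, ?_, ?_⟩
  · obtain rfl : s = 1 - t := by linarith
    module
  · rw [DD_comb _ _ _ _ _ _ hst, DD_neg p u p, DD_base]; ring
  · rw [DD_comb' _ _ _ _ _ _ hst, DD_base]; ring

lemma pos_of_mul {s d : ℝ} (hs : 0 ≤ s) (h : 0 < s * d) : 0 < d := by
  by_contra hc
  nlinarith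

lemma spoke_cone {H : Finset Pt} {p a b h x : Pt} (hab : Nxt H p a b) (hh : h ∈ H)
    (hx : x ∈ segment ℝ p h) (h1 : 0 < DD p a x) (h2 : 0 < DD p x b) : False := by
  obtain ⟨s, t, hs, ht, hst, rfl⟩ := hx
  rw [DD_comb _ _ _ _ _ _ hst, DD_neg p a p, DD_base] at h1
  rw [DD_comb' _ _ _ _ _ _ hst, DD_base] at h2
  exact hab.2.2.2 h hh ⟨pos_of_mul ht (by linarith), pos_of_mul ht (by linarith)⟩

lemma spoke_rim {H : Finset Pt} {p a b h x : Pt} (S : StarSet H p) (hab : Nxt H p a b) (hh : h ∈ H)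
    (hx : x ∈ segment ℝ p h) (hx' : x ∈ segment ℝ a b) : x = h ∧ (x = a ∨ x = b) := by
  have key : x ∈ H → x = h := by
    intro hxH
    obtain ⟨s, hs, he, -⟩ := spoke_pos (u := p) hx
    rcases hs.eq_or_lt with rfl | hs
    · exfalso
      have : x = p := by simpa [sub_eq_zero] using he
      exact S.np (this ▸ hxH)
    · exact S.ray x hxH h hh s hs he
  rcases seg_cases hab hx' with rfl | rfl | ⟨h1, h2, -⟩
  · exact ⟨key hab.1, Or.inl rfl⟩
  · exact ⟨key hab.2.1, Or.inr rfl⟩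
  · exact (spoke_cone hab hh hx h1 h2).elim

lemma spoke_spoke {H : Finset Pt} {p h k x : Pt} (S : StarSet H p) (hh : h ∈ H) (hk : k ∈ H)
    (hx : x ∈ segment ℝ p h) (hx' : x ∈ segment ℝ p k) : x = p ∨ h = k := by
  obtain ⟨s, hs, he, -⟩ := spoke_pos (u := p) hx
  obtain ⟨t, ht, he', -⟩ := spoke_pos (u := p) hx'
  rcases hs.eq_or_lt with rfl | hs
  · left; simpa [sub_eq_zero] using he
  rcases ht.eq_or_lt with rfl | ht
  · left; simpa [sub_eq_zero] using he'
  right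
  refine S.ray h hh k hk (s⁻¹ * t) (by positivity) ?_
  rw [mul_smul, ← he', he, smul_smul, inv_mul_cancel₀ hs.ne', one_smul]

lemma rim_rim {H : Finset Pt} {p a b c d x : Pt} (S : StarSet H p) (hab : Nxt H p a b)
    (hcd : Nxt H p c d) (hx : x ∈ segment ℝ a b) (hx' : x ∈ segment ℝ c d) :
    ((x = a ∨ x = b) ∧ (x = c ∨ x = d)) ∨ (a = c ∧ b = d) := by
  rcases seg_cases hab hx with h | h | ⟨h1, h2, -⟩
  · have := (spoke_rim S hcd hab.1 (x := x) (by rw [h]; exact right_mem_segment _ _ _) hx').2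
    tauto
  · have := (spoke_rim S hcd hab.2.1 (x := x) (by rw [h]; exact right_mem_segment _ _ _) hx').2
    tauto
  · rcases seg_cases hcd hx' with h | h | ⟨h3, h4, -⟩
    · have := (spoke_rim S hab hcd.1 (x := x) (by rw [h]; exact right_mem_segment _ _ _) hx).2
      tauto
    · have := (spoke_rim S hab hcd.2.1 (x := x) (by rw [h]; exact right_mem_segment _ _ _) hx).2
      tauto
    · exact Or.inr (cone_uniq S hab hcd h1 h2 h3 h4)

lemma crosses_congr {a b c d a' b' c' d' : Pt} (h : s(a, b) = s(a', b')) (h' : s(c, d) = s(c', d')) :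
    Crosses a b c d ↔ Crosses a' b' c' d' := by
  rw [Sym2.eq_iff] at h h'
  unfold Crosses
  rcases h with ⟨rfl, rfl⟩ | ⟨rfl, rfl⟩ <;> rcases h' with ⟨rfl, rfl⟩ | ⟨rfl, rfl⟩
  · rfl
  · simp only [segment_symm ℝ c d, or_comm (b := _ = d)]
  · simp only [segment_symm ℝ a b, or_comm (b := _ = b)]
  · simp only [segment_symm ℝ a b, or_comm (b := _ = b), segment_symm ℝ c d, or_comm (b := _ = d)]

lemma wheel_valid {P : Finset Pt} {p : Pt} (hp : p ∈ P) (S : StarSet (P.erase p) p) :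
    ValidSegs P (Wheel (P.erase p) p) := by
  have mem : ∀ {a}, a ∈ P.erase p → a ∈ P := fun h => Finset.mem_of_mem_erase h
  constructor
  · rintro e (⟨h, hh, rfl⟩ | ⟨a, b, hab, rfl⟩)
    · exact ⟨p, h, hp, mem hh, (Finset.ne_of_mem_erase hh).symm, rfl⟩
    · refine ⟨a, b, mem hab.1, mem hab.2.1, ?_, rfl⟩
      rintro rfl
      have := hab.2.2.1
      rw [DD_self] at this
      exact lt_irrefl _ this
  · intro a b c d h1 h2 hne
    rcases h1 with ⟨h, hh, e1⟩ | ⟨a', b', hab, e1⟩ <;> rcases h2 with ⟨k, hk, e2⟩ | ⟨c', d', hcd, e2⟩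
    all_goals
      rw [crosses_congr e1 e2]
      rw [e1, e2] at hne
      rintro ⟨x, hx, hx', hn⟩
      apply hn
    · rcases spoke_spoke S hh hk hx hx' with rfl | rfl
      · simp
      · exact (hne rfl).elim
    · have := spoke_rim S hcd hh hx hx'
      tauto
    · have := spoke_rim S hab hk hx' hx
      tauto
    · rcases rim_rim S hab hcd hx hx' with h | ⟨rfl, rfl⟩
      · exact h
      · exact (hne rfl).elim

lemma max_aux {P : Finset Pt} {p : Pt} (S : StarSet (P.erase p) p)
    {T' : Set (Sym2 Pt)} (hT : ValidSegs P T') (hsub : Wheel (P.erase p) p ⊆ T') {a b : Pt}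
    (ha : a ∈ P.erase p) (hb : b ∈ P.erase p) (hab : s(a, b) ∈ T') (hD : 0 < DD p a b) :
    Nxt (P.erase p) p a b := by
  refine ⟨ha, hb, hD, ?_⟩
  rintro c hc ⟨h1, h2⟩
  have hcT : s(p, c) ∈ T' := hsub (Or.inl ⟨c, hc, rfl⟩)
  have hpa := Finset.ne_of_mem_erase ha
  have hpb := Finset.ne_of_mem_erase hb
  have hout := S.out a ha b hb c hc h1 h2 hD
  have hs : 0 < DD p a c + DD p c b := by linarith
  refine hT.2 a b p c hab hcT ?_ ?_
  · rw [Ne, Sym2.eq_iff]; tauto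
  refine ⟨(DD p c b / (DD p a c + DD p c b)) • a + (DD p a c / (DD p a c + DD p c b)) • b,
    ⟨_, _, by positivity, by positivity, by field_simp; ring, rfl⟩,
    ⟨1 - DD p a b / (DD p a c + DD p c b), DD p a b / (DD p a c + DD p c b), ?_, by positivity,
      by ring, ?_⟩, ?_⟩
  · have := (div_le_one hs).mpr hout
    linarith
  · ext
    · simp only [Prod.fst_add, Prod.smul_fst, smul_eq_mul]
      field_simp
      unfold DD; ring
    · simp only [Prod.snd_add, Prod.smul_snd, smul_eq_mul]
      field_simp
      unfold DD; ring
  · rintro ⟨h, -⟩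
    set x := (DD p c b / (DD p a c + DD p c b)) • a + (DD p a c / (DD p a c + DD p c b)) • b with hx
    have hsum : DD p c b / (DD p a c + DD p c b) + DD p a c / (DD p a c + DD p c b) = 1 := by
      field_simp; ring
    have e1 : 0 < DD p a x := by
      rw [hx, DD_comb _ _ _ _ _ _ hsum, DD_self]; simp only [mul_zero, zero_add]; positivity
    have e2 : 0 < DD p x b := by
      rw [hx, DD_comb' _ _ _ _ _ _ hsum, DD_self]; simp only [mul_zero, add_zero]; positivity
    rcases h with h | h
    · rw [h, DD_self] at e1; exact lt_irrefl _ e1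
    · rw [h, DD_self] at e2; exact lt_irrefl _ e2

lemma zero_opp {H : Finset Pt} {p : Pt} (S : StarSet H p) {a b : Pt} (ha : a ∈ H) (hb : b ∈ H)
    (hne : a ≠ b) (h0 : DD p a b = 0) : p ∈ segment ℝ a b := by
  obtain ⟨x, hx, hax⟩ := S.ex a ha
  rcases lt_trichotomy (DD p b x) 0 with h | h | h
  · have hs : 0 < DD p a x - DD p b x := by linarith
    refine ⟨-DD p b x / (DD p a x - DD p b x), DD p a x / (DD p a x - DD p b x),
      div_nonneg (by linarith) hs.le, by positivity, by field_simp; ring, ?_⟩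
    ext
    · simp only [Prod.fst_add, Prod.smul_fst, smul_eq_mul]
      field_simp
      have : - (DD p b x * a.1) + DD p a x * b.1 - (p.1 * (DD p a x - DD p b x))
        = DD p a b * (x.1 - p.1) := by unfold DD; ring
      rw [h0] at this; linarith
    · simp only [Prod.snd_add, Prod.smul_snd, smul_eq_mul]
      field_simp
      have : - (DD p b x * a.2) + DD p a x * b.2 - (p.2 * (DD p a x - DD p b x))
        = DD p a b * (x.2 - p.2) := by unfold DD; ring
      rw [h0] at this; linarith
  · skip
    exfalso
    obtain ⟨y, hy, hby⟩ := S.ex b hb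
    have e := DD_plucker p a b x y
    rw [h0, h] at e
    nlinarith [mul_pos hax hby]
  · exact (hne (S.ray' ha hb h0 hax h)).elim

lemma wheel_tri {P : Finset Pt} {p : Pt} (hp : p ∈ P) (S : StarSet (P.erase p) p) :
    IsTriangulation P (Wheel (P.erase p) p) := by
  refine ⟨wheel_valid hp S, ?_⟩
  intro T' hT hsub
  refine Subset.antisymm ?_ hsub
  intro e he
  obtain ⟨a, b, ha, hb, hne, rfl⟩ := hT.1 e he
  by_cases hap : a = p
  · subst hap
    exact Or.inl ⟨b, Finset.mem_erase.mpr ⟨hne.symm, hb⟩, rfl⟩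
  by_cases hbp : b = p
  · subst hbp
    exact Or.inl ⟨a, Finset.mem_erase.mpr ⟨hne, ha⟩, Sym2.eq_swap⟩
  have ha' : a ∈ P.erase p := Finset.mem_erase.mpr ⟨hap, ha⟩
  have hb' : b ∈ P.erase p := Finset.mem_erase.mpr ⟨hbp, hb⟩
  rcases lt_trichotomy (DD p a b) 0 with h | h | h
  · have h' : 0 < DD p b a := by rw [DD_neg]; linarith
    exact Or.inr ⟨b, a, max_aux S hT hsub hb' ha' (by rwa [Sym2.eq_swap]) h', Sym2.eq_swap⟩
  · exfalso
    refine hT.2 a b p a he (hsub (Or.inl ⟨a, ha', rfl⟩)) ?_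
      ⟨p, zero_opp S ha' hb' hne h, left_mem_segment _ _ _, ?_⟩
    · rw [Ne, Sym2.eq_iff]; tauto
    · rintro ⟨h | h, -⟩
      · exact hap h.symm
      · exact hbp h.symm
  · exact Or.inr ⟨a, b, max_aux S hT hsub ha' hb' he h, rfl⟩

lemma clockwise_iff (a b c : Pt) : Clockwise a b c ↔ DD a b c < 0 := Iff.rfl

lemma IsTriangleOf.rot {P : Finset Pt} {T : Set (Sym2 Pt)} {a b c : Pt}
    (h : IsTriangleOf P T a b c) : IsTriangleOf P T b c a := by
  obtain ⟨ha, hb, hc, h1, h2, h3, h4, h5, h6, h7, h8⟩ := h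
  have e : openTriangle b c a = openTriangle a b c := by
    unfold openTriangle
    congr 2
    ext x; simp; tauto
  refine ⟨hb, hc, ha, h2, h3.symm, h1.symm, h5, by rwa [Sym2.eq_swap], by rwa [Sym2.eq_swap], ?_, ?_⟩
  · rw [e]; exact h7
  · rw [e]; exact h8

lemma Clockwise.rot {a b c : Pt} (h : Clockwise a b c) : Clockwise b c a := by
  rw [clockwise_iff] at *
  have : DD b c a = DD a b c := by unfold DD; ring
  linarith

lemma mem_openTriangle {a b c p : Pt} (h1 : 0 < DD p a b) (h2 : 0 < DD p b c) (h3 : 0 < DD p c a) :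
    p ∈ openTriangle a b c := by
  have ho : IsOpen {x : Pt | 0 < DD x a b ∧ 0 < DD x b c ∧ 0 < DD x c a} := by
    unfold DD
    exact (isOpen_lt (by fun_prop) (by fun_prop)).and
      ((isOpen_lt (by fun_prop) (by fun_prop)).and (isOpen_lt (by fun_prop) (by fun_prop)))
  refine interior_maximal ?_ ho ⟨h1, h2, h3⟩
  rintro x ⟨g1, g2, g3⟩
  have hs : 0 < DD x a b + DD x b c + DD x c a := by linarith
  have hs' : 0 < DD x c a + DD x a b := by linarith
  have ha : a ∈ convexHull ℝ ({a, b, c} : Set Pt) := subset_convexHull ℝ _ (by simp)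
  have hb : b ∈ convexHull ℝ ({a, b, c} : Set Pt) := subset_convexHull ℝ _ (by simp)
  have hc : c ∈ convexHull ℝ ({a, b, c} : Set Pt) := subset_convexHull ℝ _ (by simp)
  have hy := (convex_convexHull ℝ ({a, b, c} : Set Pt)) hb hc
    (a := DD x c a / (DD x c a + DD x a b)) (b := DD x a b / (DD x c a + DD x a b))
    (by positivity) (by positivity) (by field_simp)
  have hz := (convex_convexHull ℝ ({a, b, c} : Set Pt)) ha hy
    (a := DD x b c / (DD x a b + DD x b c + DD x c a))
    (b := (DD x c a + DD x a b) / (DD x a b + DD x b c + DD x c a))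
    (by positivity) (by positivity) (by field_simp; ring)
  convert hz using 1
  ext
  · simp only [Prod.fst_add, Prod.smul_fst, smul_eq_mul]
    field_simp
    unfold DD; ring
  · simp only [Prod.snd_add, Prod.smul_snd, smul_eq_mul]
    field_simp
    unfold DD; ring

lemma openTriangle_pos {a b c z : Pt} (h : 0 < DD a b c) (hz : z ∈ openTriangle a b c) :
    0 < DD a b z := by
  apply half_plane hz
  · rintro rfl
    rw [DD_base] at h; exact lt_irrefl _ h
  · apply half_hull
    rintro x (rfl | rfl | rfl)
    · rw [DD_neg, DD_base]; simp
    · rw [DD_self]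
    · exact h.le

lemma openTriangle_rot (a b c : Pt) : openTriangle b c a = openTriangle a b c := by
  unfold openTriangle
  congr 2
  ext x; simp; tauto

lemma wheel_triangle {P : Finset Pt} {p x y : Pt} (hp : p ∈ P) (S : StarSet (P.erase p) p)
    (hxy : Nxt (P.erase p) p x y) : IsTriangleOf P (Wheel (P.erase p) p) p y x ∧ Clockwise p y x := by
  have mem : ∀ {a}, a ∈ P.erase p → a ∈ P := fun h => Finset.mem_of_mem_erase h
  have hD := hxy.2.2.1
  have hD2 : DD p y x < 0 := by rw [DD_neg]; linarith
  have key : ∀ z ∈ openTriangle p y x, 0 < DD p x z ∧ 0 < DD p z y ∧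
      DD p x z + DD p z y < DD p x y := by
    intro z hz
    have e0 : openTriangle p y x = openTriangle p x y := by
      unfold openTriangle; congr 2; ext x; simp; tauto
    rw [e0] at hz
    have g1 := openTriangle_pos hD hz
    have g2 : 0 < DD x y z := openTriangle_pos (c := p)
      (by have : DD x y p = DD p x y := by (unfold DD; ring)
          linarith) (by rw [openTriangle_rot]; exact hz)
    have g3 : 0 < DD y p z := openTriangle_pos (c := x)
      (by have : DD y p x = DD p x y := by (unfold DD; ring)
          linarith) (by rw [← openTriangle_rot]; rw [openTriangle_rot, openTriangle_rot, openTriangle_rot]; exact hz)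
    refine ⟨g1, ?_, ?_⟩
    · have : DD p z y = DD y p z := by unfold DD; ring
      linarith
    · have : DD p x y - (DD p x z + DD p z y) = DD x y z := by unfold DD; ring
      linarith
  have segs : ∀ u v : Pt, s(u, v) ∈ Wheel (P.erase p) p → ∀ z ∈ segment ℝ u v,
      z ∉ openTriangle p y x := by
    intro u v huv z hz hz'
    obtain ⟨g1, g2, g3⟩ := key z hz'
    rcases huv with ⟨h, hh, e⟩ | ⟨c, d, hcd, e⟩
    · have hz : z ∈ segment ℝ p h := by
        rw [Sym2.eq_iff] at e
        rcases e with ⟨rfl, rfl⟩ | ⟨rfl, rfl⟩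
        · exact hz
        · rwa [segment_symm]
      exact spoke_cone hxy hh hz g1 g2
    · have hz : z ∈ segment ℝ c d := by
        rw [Sym2.eq_iff] at e
        rcases e with ⟨rfl, rfl⟩ | ⟨rfl, rfl⟩
        · exact hz
        · rwa [segment_symm]
      rcases seg_cases hcd hz with rfl | rfl | ⟨k1, k2, k3⟩
      · exact hxy.2.2.2 _ hcd.1 ⟨g1, g2⟩
      · exact hxy.2.2.2 _ hcd.2.1 ⟨g1, g2⟩
      · obtain ⟨rfl, rfl⟩ := cone_uniq S hxy hcd g1 g2 k1 k2
        linarith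
  refine ⟨⟨hp, mem hxy.2.1, mem hxy.1, (Finset.ne_of_mem_erase hxy.2.1).symm, ?_,
    (Finset.ne_of_mem_erase hxy.1).symm, Or.inl ⟨y, hxy.2.1, rfl⟩,
    Or.inr ⟨x, y, hxy, Sym2.eq_swap⟩, Or.inl ⟨x, hxy.1, rfl⟩, ?_, segs⟩, hD2⟩
  · rintro rfl
    rw [DD_self] at hD; exact lt_irrefl _ hD
  · intro q hq
    by_cases hqp : q = p
    · subst hqp
      exact segs q x (Or.inl ⟨x, hxy.1, rfl⟩) q (left_mem_segment _ _ _)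
    · exact segs p q (Or.inl ⟨q, Finset.mem_erase.mpr ⟨hqp, hq⟩, rfl⟩) q (right_mem_segment _ _ _)

lemma wheel_edge {P : Finset Pt} {p a b : Pt} (ha : a ≠ p) (hb : b ≠ p)
    (h : s(a, b) ∈ Wheel (P.erase p) p) : Nxt (P.erase p) p a b ∨ Nxt (P.erase p) p b a := by
  rcases h with ⟨h, hh, e⟩ | ⟨c, d, hcd, e⟩
  · rw [Sym2.eq_iff] at e; tauto
  · rw [Sym2.eq_iff] at e
    rcases e with ⟨rfl, rfl⟩ | ⟨rfl, rfl⟩ <;> tauto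

lemma wheel_tri_iff {P : Finset Pt} {p : Pt} (hp : p ∈ P) (S : StarSet (P.erase p) p) (a b c : Pt) :
    (IsTriangleOf P (Wheel (P.erase p) p) a b c ∧ Clockwise a b c) ↔
      ((a = p ∧ Nxt (P.erase p) p c b) ∨ (b = p ∧ Nxt (P.erase p) p a c) ∨
        (c = p ∧ Nxt (P.erase p) p b a)) := by
  have one : ∀ b c, IsTriangleOf P (Wheel (P.erase p) p) p b c → Clockwise p b c →
      Nxt (P.erase p) p c b := by
    rintro b c ⟨-, -, -, h1, h2, h3, -, h5, -⟩ hcl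
    rcases wheel_edge h1.symm h3.symm h5 with h | h
    · exact absurd h.2.2.1 (not_lt.mpr (le_of_lt hcl))
    · exact h
  constructor
  · rintro ⟨ht, hcl⟩
    by_cases hap : a = p
    · subst hap
      exact Or.inl ⟨rfl, one _ _ ht hcl⟩
    by_cases hbp : b = p
    · subst hbp
      exact Or.inr (Or.inl ⟨rfl, one _ _ ht.rot hcl.rot⟩)
    by_cases hcp : c = p
    · subst hcp
      exact Or.inr (Or.inr ⟨rfl, one _ _ ht.rot.rot hcl.rot.rot⟩)
    exfalso
    obtain ⟨ha, hb, hc, h1, h2, h3, h4, h5, h6, h7, h8⟩ := ht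
    have hcl' : DD a b c < 0 := hcl
    have e : DD a b c = DD p a b + DD p b c + DD p c a := by unfold DD; ring
    have fin : 0 < DD p b a → 0 < DD p c b → 0 < DD p a c → False := by
      intro k1 k2 k3
      apply h7 p hp
      have : openTriangle a b c = openTriangle b a c := by
        unfold openTriangle; congr 2; ext x; simp; tauto
      rw [this]
      exact mem_openTriangle k1 k3 k2
    rcases wheel_edge hap hbp h4 with k1 | k1 <;> rcases wheel_edge hbp hcp h5 with k2 | k2 <;>
      rcases wheel_edge hap hcp h6 with k3 | k3
    · exact k3.2.2.2 b k1.2.1 ⟨k1.2.2.1, k2.2.2.1⟩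
    · have := k1.2.2.1; have := k2.2.2.1; have := k3.2.2.1
      linarith
    · exact k1.2.2.2 c k2.1 ⟨k3.2.2.1, k2.2.2.1⟩
    · exact k2.2.2.2 a k1.1 ⟨k3.2.2.1, k1.2.2.1⟩
    · exact k2.2.2.2 a k1.2.1 ⟨k1.2.2.1, k3.2.2.1⟩
    · exact k1.2.2.2 c k2.2.1 ⟨k2.2.2.1, k3.2.2.1⟩
    · exact fin k1.2.2.1 k2.2.2.1 k3.2.2.1
    · exact k3.2.2.2 b k1.1 ⟨k2.2.2.1, k1.2.2.1⟩
  · rintro (⟨rfl, h⟩ | ⟨rfl, h⟩ | ⟨rfl, h⟩)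
    · exact wheel_triangle hp S h
    · have := wheel_triangle hp S h
      exact ⟨this.1.rot.rot, this.2.rot.rot⟩
    · have := wheel_triangle hp S h
      exact ⟨this.1.rot, this.2.rot⟩

/-- The angle of `x` seen from `p`. -/
noncomputable def ang (p x : Pt) : ℝ := Complex.arg ⟨x.1 - p.1, x.2 - p.2⟩

lemma DD_pos_iff {p a b : Pt} (ha : a ≠ p) (hb : b ≠ p) :
    0 < DD p a b ↔ (0 < ang p b - ang p a ∧ ang p b - ang p a < Real.pi) ∨
      ang p b - ang p a < - Real.pi := by
  have nz : ∀ x : Pt, x ≠ p → 0 < ‖(⟨x.1 - p.1, x.2 - p.2⟩ : ℂ)‖ := by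
    intro x hx
    rw [norm_pos_iff]
    intro h
    apply hx
    rw [Complex.ext_iff] at h
    simp only [Complex.zero_re, Complex.zero_im] at h
    ext <;> linarith [h.1, h.2]
  have e : DD p a b = ‖(⟨a.1 - p.1, a.2 - p.2⟩ : ℂ)‖ * ‖(⟨b.1 - p.1, b.2 - p.2⟩ : ℂ)‖ *
      Real.sin (ang p b - ang p a) := by
    have a1 := Complex.norm_mul_cos_arg ⟨a.1 - p.1, a.2 - p.2⟩
    have a2 := Complex.norm_mul_sin_arg ⟨a.1 - p.1, a.2 - p.2⟩
    have b1 := Complex.norm_mul_cos_arg ⟨b.1 - p.1, b.2 - p.2⟩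
    have b2 := Complex.norm_mul_sin_arg ⟨b.1 - p.1, b.2 - p.2⟩
    simp only at a1 a2 b1 b2
    unfold DD
    rw [Real.sin_sub]
    unfold ang
    generalize Complex.arg ⟨a.1 - p.1, a.2 - p.2⟩ = α at *
    generalize Complex.arg ⟨b.1 - p.1, b.2 - p.2⟩ = β at *
    generalize ‖(⟨a.1 - p.1, a.2 - p.2⟩ : ℂ)‖ = r at *
    generalize ‖(⟨b.1 - p.1, b.2 - p.2⟩ : ℂ)‖ = r' at *
    rw [← a1, ← a2, ← b1, ← b2]
    ring
  have hpos := mul_pos (nz a ha) (nz b hb)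
  rw [e, mul_pos_iff_of_pos_left hpos]
  have u1 := Complex.arg_le_pi ⟨b.1 - p.1, b.2 - p.2⟩
  have u2 := Complex.neg_pi_lt_arg ⟨b.1 - p.1, b.2 - p.2⟩
  have u3 := Complex.arg_le_pi ⟨a.1 - p.1, a.2 - p.2⟩
  have u4 := Complex.neg_pi_lt_arg ⟨a.1 - p.1, a.2 - p.2⟩
  have l1 : ang p b - ang p a < 2 * Real.pi := by unfold ang; linarith
  have l2 : - (2 * Real.pi) < ang p b - ang p a := by unfold ang; linarith
  generalize ang p b - ang p a = t at l1 l2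
  constructor
  · intro h
    by_contra hc
    push Not at hc
    obtain ⟨h1, h2⟩ := hc
    by_cases ht : 0 < t
    · have := h1 ht
      have h3 : Real.sin (t - Real.pi) = - Real.sin t := Real.sin_sub_pi t
      have := Real.sin_nonneg_of_nonneg_of_le_pi (x := t - Real.pi) (by linarith) (by linarith)
      linarith
    · have := Real.sin_nonpos_of_nonpos_of_neg_pi_le (x := t) (by linarith) (by linarith)
      linarith
  · rintro (⟨h1, h2⟩ | h)
    · exact Real.sin_pos_of_pos_of_lt_pi h1 h2
    · have := Real.sin_pos_of_pos_of_lt_pi (x := t + 2 * Real.pi) (by linarith) (by linarith)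
      rwa [Real.sin_add_two_pi] at this

lemma ang_inj {H : Finset Pt} {p : Pt} (S : StarSet H p) {a b : Pt} (ha : a ∈ H) (hb : b ∈ H)
    (h : ang p a = ang p b) : a = b := by
  have nz : ∀ x ∈ H, (⟨x.1 - p.1, x.2 - p.2⟩ : ℂ) ≠ 0 := by
    intro x hx h
    rw [Complex.ext_iff] at h
    simp only [Complex.zero_re, Complex.zero_im] at h
    have : x = p := by ext <;> linarith [h.1, h.2]
    exact S.np (this ▸ hx)
  have n1 := norm_pos_iff.mpr (nz a ha)
  have n2 := norm_pos_iff.mpr (nz b hb)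
  unfold ang at h
  rw [Complex.arg_eq_arg_iff (nz a ha) (nz b hb), Complex.ext_iff] at h
  rw [← Complex.ofReal_div] at h
  simp only [Complex.re_ofReal_mul, Complex.im_ofReal_mul] at h
  refine (S.ray b hb a ha _ (div_pos n2 n1) ?_).symm
  ext
  · simp only [Prod.fst_sub, Prod.smul_fst, smul_eq_mul]; exact h.1.symm
  · simp only [Prod.snd_sub, Prod.smul_snd, smul_eq_mul]; exact h.2.symm

lemma nxt_iff {H : Finset Pt} {p : Pt} (S : StarSet H p) {a b : Pt} (ha : a ∈ H) (hb : b ∈ H) :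
    Nxt H p a b ↔ (ang p a < ang p b ∧ ∀ c ∈ H, ¬ (ang p a < ang p c ∧ ang p c < ang p b)) ∨
      (ang p b < ang p a ∧ ∀ c ∈ H, ang p b ≤ ang p c ∧ ang p c ≤ ang p a) := by
  have ne : ∀ x ∈ H, x ≠ p := fun x hx h => S.np (h ▸ hx)
  have iff : ∀ x ∈ H, ∀ y ∈ H, (0 < DD p x y ↔ _) := fun x hx y hy => DD_pos_iff (ne x hx) (ne y hy)
  have bd : ∀ x : Pt, ang p x ≤ Real.pi ∧ - Real.pi < ang p x := fun x =>
    ⟨Complex.arg_le_pi _, Complex.neg_pi_lt_arg _⟩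
  have ba := bd a
  have bb := bd b
  have hpi := Real.pi_pos
  constructor
  · rintro ⟨-, -, hD, hn⟩
    rw [iff a ha b hb] at hD
    rcases hD with ⟨h1, h2⟩ | h
    · left
      refine ⟨by linarith, ?_⟩
      rintro c hc ⟨h3, h4⟩
      apply hn c hc
      rw [iff a ha c hc, iff c hc b hb]
      exact ⟨Or.inl ⟨by linarith, by linarith⟩, Or.inl ⟨by linarith, by linarith⟩⟩
    · right
      refine ⟨by linarith, ?_⟩
      intro c hc
      have bc := bd c
      have := hn c hc
      rw [iff a ha c hc, iff c hc b hb] at this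
      constructor
      · by_contra hlt
        push Not at hlt
        exact this ⟨Or.inr (by linarith), Or.inl ⟨by linarith, by linarith⟩⟩
      · by_contra hlt
        push Not at hlt
        exact this ⟨Or.inl ⟨by linarith, by linarith⟩, Or.inr (by linarith)⟩
  · obtain ⟨d, hd, had⟩ := S.ex a ha
    rw [iff a ha d hd] at had
    have bd' := bd d
    rintro (⟨h1, h2⟩ | ⟨h1, h2⟩)
    · refine ⟨ha, hb, ?_, ?_⟩
      · rw [iff a ha b hb]
        left
        refine ⟨by linarith, ?_⟩
        rcases had with ⟨h3, h4⟩ | h3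
        · have := h2 d hd
          by_contra hc
          exact this ⟨by linarith, by linarith⟩
        · linarith
      · intro c hc
        have bc := bd c
        rw [iff a ha c hc, iff c hc b hb]
        rintro ⟨h3 | h3, h4 | h4⟩
        · exact h2 c hc ⟨by linarith, by linarith⟩
        · linarith
        · linarith
        · linarith
    · refine ⟨ha, hb, ?_, ?_⟩
      · rw [iff a ha b hb]
        right
        have := h2 d hd
        rcases had with ⟨h3, h4⟩ | h3 <;> linarith
      · intro c hc
        have bc := bd c
        have := h2 c hc
        rw [iff a ha c hc, iff c hc b hb]
        rintro ⟨h3 | h3, h4 | h4⟩ <;> linarith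

/-- Cyclic successor on indices. -/
def CycRel (m : ℕ) (i j : Fin m) : Prop :=
  i.val + 1 = j.val ∨ (j.val < i.val ∧ j.val = 0 ∧ i.val + 1 = m)

lemma exists_enum {H : Finset Pt} {p : Pt} (S : StarSet H p) {m : ℕ} (hm : H.card = m) :
    ∃ e : Fin m ≃ H, ∀ i j, Nxt H p (e i) (e j) ↔ CycRel m i j := by
  have hinj : Set.InjOn (ang p) (H : Set Pt) := fun a ha b hb h => ang_inj S ha hb h
  have hcard : (H.image (ang p)).card = m := by rw [Finset.card_image_of_injOn hinj, hm]
  let k := (H.image (ang p)).orderIsoOfFin hcard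
  have hk : ∀ i, ∃ x : H, ang p x = k i := by
    intro i
    obtain ⟨x, hx, h⟩ := Finset.mem_image.mp (k i).2
    exact ⟨⟨x, hx⟩, h⟩
  choose f hf using hk
  have hlt : ∀ i j, ang p (f i) < ang p (f j) ↔ i < j := by
    intro i j
    rw [hf, hf, Subtype.coe_lt_coe, k.lt_iff_lt]
  have hfi : Function.Injective f := by
    intro i j h
    rcases lt_trichotomy i j with h' | h' | h'
    · rw [← hlt, h] at h'; exact (lt_irrefl _ h').elim
    · exact h'
    · rw [← hlt, h] at h'; exact (lt_irrefl _ h').elim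
  have hfb : Function.Bijective f := by
    rw [Fintype.bijective_iff_injective_and_card]
    exact ⟨hfi, by simp [hm]⟩
  refine ⟨Equiv.ofBijective f hfb, ?_⟩
  intro i j
  simp only [Equiv.ofBijective_apply]
  have hall : ∀ Q : Pt → Prop, (∀ c ∈ H, Q c) ↔ ∀ l, Q (f l) := by
    intro Q
    constructor
    · intro h l; exact h _ (f l).2
    · intro h c hc
      obtain ⟨l, hl⟩ := hfb.2 ⟨c, hc⟩
      have := h l
      rwa [hl] at this
  rw [nxt_iff S (f i).2 (f j).2, hall, hall]
  simp only [← not_lt, hlt]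
  unfold CycRel
  constructor
  · rintro (⟨h1, h2⟩ | ⟨h1, h2⟩)
    · left
      have h1' : i.val < j.val := h1
      by_contra hc
      exact h2 ⟨i.val + 1, by omega⟩ ⟨Fin.lt_def.mpr (by simp), Fin.lt_def.mpr (by simp only; omega)⟩
    · right
      have h1' : j.val < i.val := h1
      refine ⟨h1', ?_, ?_⟩
      · have := (h2 ⟨0, by omega⟩).1
        rw [Fin.lt_def] at this; simp only at this; omega
      · have := (h2 ⟨m - 1, by omega⟩).2
        rw [Fin.lt_def] at this; simp only at this; omega
  · rintro (h | ⟨h1, h2, h3⟩)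
    · left
      refine ⟨Fin.lt_def.mpr (by omega), ?_⟩
      intro l
      rw [Fin.lt_def, Fin.lt_def]; omega
    · right
      refine ⟨Fin.lt_def.mpr (by omega), ?_⟩
      intro l
      rw [Fin.lt_def, Fin.lt_def]; omega

/-- Two point sets of the same size, each with exactly one internal point,
have compatible triangulations, obtained by joining the internal point of each set to all
convex hull points of that set. -/
theorem stmt5 (n : ℕ) (P Q : Finset Pt) (hPn : P.card = n) (hQn : Q.card = n)
    (hP : ¬ Collinear ℝ (P : Set Pt)) (hQ : ¬ Collinear ℝ (Q : Set Pt))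
    (pP pQ : Pt)
    (hPint : {x : Pt | InternalPoint P x} = {pP})
    (hQint : {x : Pt | InternalPoint Q x} = {pQ}) :
    ∃ TP TQ : Set (Sym2 Pt), IsTriangulation P TP ∧ IsTriangulation Q TQ ∧
      Compatible P Q TP TQ ∧
      (∀ h : Pt, HullPoint P h → s(pP, h) ∈ TP) ∧
      (∀ h : Pt, HullPoint Q h → s(pQ, h) ∈ TQ) := by
  classical
  have hp : InternalPoint P pP := by
    have : pP ∈ {x : Pt | InternalPoint P x} := by rw [hPint]; rfl
    exact this
  have hq : InternalPoint Q pQ := by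
    have : pQ ∈ {x : Pt | InternalPoint Q x} := by rw [hQint]; rfl
    exact this
  have SP := star_of P pP hPint
  have SQ := star_of Q pQ hQint
  have hcP : (P.erase pP).card = n - 1 := by rw [Finset.card_erase_of_mem hp.1, hPn]
  have hcQ : (Q.erase pQ).card = n - 1 := by rw [Finset.card_erase_of_mem hq.1, hQn]
  obtain ⟨eP, heP⟩ := exists_enum SP hcP
  obtain ⟨eQ, heQ⟩ := exists_enum SQ hcQ
  have hull : ∀ (R : Finset Pt) (r h : Pt), InternalPoint R r → HullPoint R h →
      s(r, h) ∈ Wheel (R.erase r) r := by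
    intro R r h hr hh
    refine Or.inl ⟨h, Finset.mem_erase.mpr ⟨?_, hh.1⟩, rfl⟩
    rintro rfl
    exact hh.2.2 hr.2
  refine ⟨Wheel (P.erase pP) pP, Wheel (Q.erase pQ) pQ, wheel_tri hp.1 SP, wheel_tri hq.1 SQ, ?_,
    fun h hh => hull P pP h hp hh, fun h hh => hull Q pQ h hq hh⟩
  let φ : Pt → Pt := fun x => if h : x ∈ P.erase pP then (eQ (eP.symm ⟨x, h⟩) : Pt) else pQ
  have φH : ∀ x (h : x ∈ P.erase pP), φ x = eQ (eP.symm ⟨x, h⟩) := by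
    intro x h; simp only [φ, dif_pos h]
  have φp : φ pP = pQ := by simp [φ]
  have φm : ∀ x ∈ P.erase pP, φ x ∈ Q.erase pQ := by
    intro x h; rw [φH x h]; exact (eQ _).2
  have φeq : ∀ x ∈ P, (φ x = pQ ↔ x = pP) := by
    intro x hx
    constructor
    · intro h
      by_contra hc
      exact Finset.ne_of_mem_erase (φm x (Finset.mem_erase.mpr ⟨hc, hx⟩)) h
    · rintro rfl; exact φp
  have φN : ∀ x ∈ P, ∀ y ∈ P, (Nxt (P.erase pP) pP x y ↔ Nxt (Q.erase pQ) pQ (φ x) (φ y)) := by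
    intro x hx y hy
    by_cases hxp : x = pP
    · subst hxp
      exact ⟨fun h => (SP.np h.1).elim, fun h => (SQ.np (φp ▸ h.1)).elim⟩
    by_cases hyp : y = pP
    · subst hyp
      exact ⟨fun h => (SP.np h.2.1).elim, fun h => (SQ.np (φp ▸ h.2.1)).elim⟩
    have hx' : x ∈ P.erase pP := Finset.mem_erase.mpr ⟨hxp, hx⟩
    have hy' : y ∈ P.erase pP := Finset.mem_erase.mpr ⟨hyp, hy⟩
    rw [φH x hx', φH y hy', heQ, ← heP]
    simp
  refine ⟨φ, ⟨?_, ?_, ?_⟩, ?_⟩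
  · intro x hx
    by_cases hxp : x = pP
    · subst hxp; rw [φp]; exact hq.1
    · exact Finset.mem_of_mem_erase (φm x (Finset.mem_erase.mpr ⟨hxp, hx⟩))
  · intro x hx y hy h
    by_cases hxp : x = pP
    · subst hxp
      rw [φp] at h
      exact ((φeq y hy).mp h.symm).symm
    by_cases hyp : y = pP
    · subst hyp
      rw [φp] at h
      exact (φeq x hx).mp h
    rw [φH x (Finset.mem_erase.mpr ⟨hxp, hx⟩), φH y (Finset.mem_erase.mpr ⟨hyp, hy⟩)] at h
    have := eP.symm.injective (eQ.injective (Subtype.ext h))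
    exact congrArg Subtype.val this
  · intro y hy
    by_cases hyp : y = pQ
    · exact ⟨pP, hp.1, by rw [φp, hyp]⟩
    · have hy' : y ∈ Q.erase pQ := Finset.mem_erase.mpr ⟨hyp, hy⟩
      refine ⟨eP (eQ.symm ⟨y, hy'⟩), Finset.mem_of_mem_erase (eP _).2, ?_⟩
      rw [φH _ (eP _).2]
      simp
  · intro a b c ha hb hc
    rw [wheel_tri_iff hp.1 SP, wheel_tri_iff hq.1 SQ, φeq a ha, φeq b hb, φeq c hc,
      ← φN c hc b hb, ← φN a ha c hc, ← φN b hb a ha]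
end

section
/- If T_P is a triangulation of a finite point set P and T_Q is a triangulation of a finite point set Q (each set not contained in a line), and T_P and T_Q are compatible via a bijection φ: P → Q, then for every point p ∈ P, the degree of p in T_P equals the degree of φ(p) in T_Q. -/
open Set

/-- Affine coordinates with respect to a frame. -/
theorem exists_coords (a X U : Pt) (hD : det2 X U ≠ 0) :
    ∃ α β : Pt → ℝ, (∀ y, y = a + α y • X + β y • U) ∧
      (∀ r s : ℝ, α (a + r • X + s • U) = r ∧ β (a + r • X + s • U) = s) ∧
      (∀ (t s : ℝ) (y w : Pt), t + s = 1 → α (t • y + s • w) = t * α y + s * α w) ∧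
      (∀ (t s : ℝ) (y w : Pt), t + s = 1 → β (t • y + s • w) = t * β y + s * β w) ∧
      (∀ y, α y = det2 (y - a) U / det2 X U) ∧ (∀ y, β y = det2 X (y - a) / det2 X U) := by
  refine ⟨fun y => det2 (y - a) U / det2 X U, fun y => det2 X (y - a) / det2 X U, ?_, ?_, ?_, ?_,
    fun _ => rfl, fun _ => rfl⟩
  · intro y
    obtain ⟨y1, y2⟩ := y; obtain ⟨a1, a2⟩ := a; obtain ⟨x1, x2⟩ := X; obtain ⟨u1, u2⟩ := U
    simp only [det2, Prod.mk_sub_mk, Prod.smul_mk, Prod.mk_add_mk, smul_eq_mul, Prod.mk.injEq] at *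
    obtain ⟨D, hDe⟩ : ∃ D, D = x1 * u2 - x2 * u1 := ⟨_, rfl⟩
    rw [← hDe] at hD ⊢
    constructor
    · field_simp; rw [hDe]; ring
    · field_simp; rw [hDe]; ring
  · intro r s
    obtain ⟨a1, a2⟩ := a; obtain ⟨x1, x2⟩ := X; obtain ⟨u1, u2⟩ := U
    simp only [det2, Prod.mk_sub_mk, Prod.smul_mk, Prod.mk_add_mk, smul_eq_mul] at *
    constructor
    · rw [div_eq_iff hD]; ring
    · rw [div_eq_iff hD]; ring
  · intro t s y w h
    obtain rfl : t = 1 - s := by linarith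
    simp only [det2, Prod.fst_sub, Prod.snd_sub, Prod.smul_fst, Prod.smul_snd, Prod.fst_add,
      Prod.snd_add, smul_eq_mul] at *
    field_simp; ring
  · intro t s y w h
    obtain rfl : t = 1 - s := by linarith
    simp only [det2, Prod.fst_sub, Prod.snd_sub, Prod.smul_fst, Prod.smul_snd, Prod.fst_add,
      Prod.snd_add, smul_eq_mul] at *
    field_simp; ring

/-- First exit time of two affine functions from positivity. -/
theorem exit_time (p0 p1 q0 q1 : ℝ) (hp : 0 < p0) (hq : 0 < q0) (h : p1 ≤ 0 ∨ q1 ≤ 0) :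
    ∃ t : ℝ, 0 < t ∧ t ≤ 1 ∧ 0 ≤ (1 - t) * p0 + t * p1 ∧ 0 ≤ (1 - t) * q0 + t * q1 ∧
      ((1 - t) * p0 + t * p1 = 0 ∨ (1 - t) * q0 + t * q1 = 0) := by
  have key : ∀ p0 p1 q0 q1 : ℝ, 0 < p0 → 0 < q0 → p1 ≤ 0 → 
      0 ≤ (1 - p0/(p0-p1)) * q0 + p0/(p0-p1) * q1 → 
      ∃ t : ℝ, 0 < t ∧ t ≤ 1 ∧ 0 ≤ (1 - t) * p0 + t * p1 ∧ 0 ≤ (1 - t) * q0 + t * q1 ∧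
      ((1 - t) * p0 + t * p1 = 0 ∨ (1 - t) * q0 + t * q1 = 0) := by
    intro p0 p1 q0 q1 hp hq h1 h2
    have hd : 0 < p0 - p1 := by linarith
    have e : (1 - p0/(p0-p1)) * p0 + p0/(p0-p1) * p1 = 0 := by field_simp; ring
    refine ⟨p0/(p0-p1), by positivity, ?_, e.ge, h2, Or.inl e⟩
    rw [div_le_one hd]; linarith
  have swap : (∃ t : ℝ, 0 < t ∧ t ≤ 1 ∧ 0 ≤ (1 - t) * q0 + t * q1 ∧ 0 ≤ (1 - t) * p0 + t * p1 ∧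
      ((1 - t) * q0 + t * q1 = 0 ∨ (1 - t) * p0 + t * p1 = 0)) → 
      ∃ t : ℝ, 0 < t ∧ t ≤ 1 ∧ 0 ≤ (1 - t) * p0 + t * p1 ∧ 0 ≤ (1 - t) * q0 + t * q1 ∧
      ((1 - t) * p0 + t * p1 = 0 ∨ (1 - t) * q0 + t * q1 = 0) := by
    rintro ⟨t, a, b, c, d, e⟩; exact ⟨t, a, b, d, c, e.symm⟩
  have tr : ∀ p0 p1 q0 q1 : ℝ, 0 < p0 → 0 < q0 → p1 ≤ 0 → 
      (1 - p0/(p0-p1)) * q0 + p0/(p0-p1) * q1 < 0 → 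
      q1 ≤ 0 ∧ 0 ≤ (1 - q0/(q0-q1)) * p0 + q0/(q0-q1) * p1 := by
    intro p0 p1 q0 q1 hp hq h1 h2
    have hd : 0 < p0 - p1 := by linarith
    have e : (1 - p0/(p0-p1)) * q0 + p0/(p0-p1) * q1 = (p0 * q1 - p1 * q0) / (p0 - p1) := by
      field_simp; ring
    rw [e, div_lt_iff₀ hd] at h2
    have hq1 : q1 ≤ 0 := by
      by_contra hc
      push Not at hc
      nlinarith [mul_pos hp hc, mul_nonneg (neg_nonneg.2 h1) hq.le]
    have hd' : 0 < q0 - q1 := by linarith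
    have e' : (1 - q0/(q0-q1)) * p0 + q0/(q0-q1) * p1 = (q0 * p1 - q1 * p0) / (q0 - q1) := by
      field_simp; ring
    refine ⟨hq1, ?_⟩
    rw [e']
    apply div_nonneg _ hd'.le
    nlinarith
  rcases h with h | h
  · by_cases h2 : 0 ≤ (1 - p0/(p0-p1)) * q0 + p0/(p0-p1) * q1
    · exact key _ _ _ _ hp hq h h2
    · obtain ⟨h3, h4⟩ := tr _ _ _ _ hp hq h (not_le.1 h2)
      exact swap (key _ _ _ _ hq hp h3 h4)
  · by_cases h2 : 0 ≤ (1 - q0/(q0-q1)) * p0 + q0/(q0-q1) * p1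
    · exact swap (key _ _ _ _ hq hp h h2)
    · obtain ⟨h3, h4⟩ := tr _ _ _ _ hq hp h (not_le.1 h2)
      exact key _ _ _ _ hp hq h3 h4

theorem interior_move {s : Set Pt} {x : Pt} (hx : x ∈ interior s) (v : Pt) :
    ∃ ε : ℝ, 0 < ε ∧ x + ε • v ∈ s := by
  have hc : Continuous (fun ε : ℝ => x + ε • v) := by fun_prop
  have h0 : (fun ε : ℝ => x + ε • v) ⁻¹' (interior s) ∈ nhds (0 : ℝ) :=
    hc.continuousAt.preimage_mem_nhds (by simpa using isOpen_interior.mem_nhds hx)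
  obtain ⟨ε, hε, hb⟩ := Metric.mem_nhds_iff.1 h0
  refine ⟨ε / 2, by positivity, interior_subset (hb ?_)⟩
  simp [abs_of_pos hε, hε]

theorem seg_left_sub {a b x y : Pt} (hx : x ∈ segment ℝ a b) (hy : y ∈ segment ℝ a b) {t : ℝ}
    (h0 : 0 ≤ t) (h1 : t ≤ 1) : (1 - t) • x + t • y ∈ segment ℝ a b :=
  (convex_segment a b) hx hy (by linarith) h0 (by ring)

theorem mem_tri_edge {P : Finset Pt} {T : Set (Sym2 Pt)} (hT : IsTriangulation P T) {a b : Pt}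
    (h : s(a, b) ∈ T) : a ∈ P ∧ b ∈ P ∧ a ≠ b := by
  obtain ⟨c, d, hc, hd, hne, e⟩ := hT.1.1 _ h
  rcases Sym2.eq_iff.1 e with ⟨rfl, rfl⟩ | ⟨rfl, rfl⟩
  · exact ⟨hc, hd, hne⟩
  · exact ⟨hd, hc, hne.symm⟩

theorem noncross {P : Finset Pt} {T : Set (Sym2 Pt)} (hT : IsTriangulation P T) {a b u v z : Pt}
    (h : s(a, b) ∈ T) (h' : s(u, v) ∈ T) (hne : s(a, b) ≠ s(u, v))
    (hz : z ∈ segment ℝ a b) (hz' : z ∈ segment ℝ u v) :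
    (z = a ∨ z = b) ∧ (z = u ∨ z = v) := by
  by_contra hc
  exact hT.1.2 a b u v h h' hne ⟨z, hz, hz', hc⟩

/-- An endpoint of an edge never lies in the relative interior of an edge. -/
theorem endpoint {P : Finset Pt} {T : Set (Sym2 Pt)} (hT : IsTriangulation P T) {a b u v : Pt}
    (h : s(a, b) ∈ T) (h' : s(u, v) ∈ T) (hz' : a ∈ segment ℝ u v) : a = u ∨ a = v := by
  by_cases hne : s(a, b) = s(u, v)
  · rcases Sym2.eq_iff.1 hne with ⟨rfl, rfl⟩ | ⟨rfl, rfl⟩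
    · exact Or.inl rfl
    · exact Or.inr rfl
  · exact (noncross hT h h' hne (left_mem_segment ℝ a b) hz').2

theorem maximal {P : Finset Pt} {T : Set (Sym2 Pt)} (hT : IsTriangulation P T) {p q : Pt}
    (hp : p ∈ P) (hq : q ∈ P) (hpq : p ≠ q)
    (h : ∀ u v x, s(u, v) ∈ T → s(u, v) ≠ s(p, q) → x ∈ segment ℝ p q → x ∈ segment ℝ u v →
      (x = p ∨ x = q) ∧ (x = u ∨ x = v)) : s(p, q) ∈ T := by
  have hv : ValidSegs P (insert s(p, q) T) := by
    constructor
    · rintro e (rfl | he)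
      · exact ⟨p, q, hp, hq, hpq, rfl⟩
      · exact hT.1.1 e he
    · rintro a b c d (h1 | h1) (h2 | h2) hne ⟨x, hx, hx', hn⟩
      · exact hne (h1.trans h2.symm)
      · have := h c d x h2 (by rw [← h1]; exact hne.symm)
        rcases Sym2.eq_iff.1 h1 with ⟨rfl, rfl⟩ | ⟨rfl, rfl⟩
        · exact hn (this hx hx')
        · have := this (by rwa [segment_symm]) hx'
          tauto
      · have := h a b x h1 (by rw [← h2]; exact hne)
        rcases Sym2.eq_iff.1 h2 with ⟨rfl, rfl⟩ | ⟨rfl, rfl⟩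
        · have := (this hx' hx); tauto
        · have := this (by rwa [segment_symm]) hx
          tauto
      · exact hT.1.2 a b c d h1 h2 hne ⟨x, hx, hx', hn⟩
  rw [← hT.2 _ hv (Set.subset_insert _ _)]
  exact Set.mem_insert _ _

theorem tri_finite {P : Finset Pt} {T : Set (Sym2 Pt)} (hT : IsTriangulation P T) : T.Finite := by
  apply (((P ×ˢ P).finite_toSet).image (fun x : Pt × Pt => s(x.1, x.2))).subset
  intro e he
  obtain ⟨a, b, ha, hb, -, rfl⟩ := hT.1.1 e he
  exact ⟨(a, b), by simp [ha, hb], rfl⟩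

/-- Points not in the relative interior of an edge. -/
def Proper (T : Set (Sym2 Pt)) (d : Pt) : Prop :=
  ∀ u v, s(u, v) ∈ T → d ∈ segment ℝ u v → d = u ∨ d = v

theorem proper_left {P : Finset Pt} {T : Set (Sym2 Pt)} (hT : IsTriangulation P T) {a b : Pt}
    (h : s(a, b) ∈ T) : Proper T a := fun _ _ h' hz => endpoint hT h h' hz

theorem proper_right {P : Finset Pt} {T : Set (Sym2 Pt)} (hT : IsTriangulation P T) {a b : Pt}
    (h : s(a, b) ∈ T) : Proper T b := proper_left hT (b := a) (by rwa [Sym2.eq_swap])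

theorem cvx_lt {s t A B m : ℝ} (hs : 0 ≤ s) (ht : 0 ≤ t) (hst : s + t = 1) (hA : m < A)
    (hB : m < B) : m < s * A + t * B := by
  obtain rfl : s = 1 - t := by linarith
  rcases eq_or_lt_of_le ht with rfl | h
  · simpa using hA
  · nlinarith

set_option maxHeartbeats 1000000 in
theorem step2 {P : Finset Pt} {T : Set (Sym2 Pt)} (hT : IsTriangulation P T) {a b c : Pt}
    (hab : s(a, b) ∈ T) (hac : s(a, c) ∈ T) (hD : 0 < det2 (b - a) (c - a))
    (hmin : ∀ v, s(a, v) ∈ T → 0 < det2 (b - a) (v - a) → ¬ 0 < det2 (v - a) (c - a)) :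
    IsTriangleOf P T a b c := by
  obtain ⟨haP, hbP, hneab⟩ := mem_tri_edge hT hab
  obtain ⟨-, hcP, hneac⟩ := mem_tri_edge hT hac
  obtain ⟨α, β, hrec, huniq, hα, hβ, hαd, hβd⟩ := exists_coords a (b - a) (c - a) hD.ne'
  have hcone : ∀ v, s(a, v) ∈ T → 0 < α v → 0 < β v → False := by
    intro v hv h1 h2
    rw [hαd] at h1
    rw [hβd] at h2
    exact hmin v hv ((div_pos_iff_of_pos_right hD).1 h2) ((div_pos_iff_of_pos_right hD).1 h1)
  have ha0 : α a = 0 ∧ β a = 0 := by simpa using huniq 0 0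
  have hb0 : α b = 1 ∧ β b = 0 := by simpa using huniq 1 0
  have hc0 : α c = 0 ∧ β c = 1 := by simpa using huniq 0 1
  have hext : ∀ y z, α y = α z → β y = β z → y = z := by
    intro y z h1 h2
    rw [hrec y, hrec z, h1, h2]
  have hsegab : ∀ z, β z = 0 → 0 ≤ α z → α z ≤ 1 → z ∈ segment ℝ a b := by
    intro z h1 h2 h3
    refine ⟨1 - α z, α z, by linarith, h2, by ring, ?_⟩
    apply hext
    · rw [hα _ _ _ _ (by ring)]; simp [ha0, hb0]
    · rw [hβ _ _ _ _ (by ring)]; simp [ha0, hb0, h1]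
  have hsegac : ∀ z, α z = 0 → 0 ≤ β z → β z ≤ 1 → z ∈ segment ℝ a c := by
    intro z h1 h2 h3
    refine ⟨1 - β z, β z, by linarith, h2, by ring, ?_⟩
    apply hext
    · rw [hα _ _ _ _ (by ring)]; simp [ha0, hc0, h1]
    · rw [hβ _ _ _ _ (by ring)]; simp [ha0, hc0]
  have hnoa : ∀ u v x, s(u, v) ∈ T → x ∈ segment ℝ u v → 0 < α x → 0 < β x → a ≠ u := by
    rintro u v x huv ⟨s, t, hs, ht, hst, rfl⟩ h1 h2 rfl
    rw [hα _ _ _ _ hst, ha0.1] at h1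
    rw [hβ _ _ _ _ hst, ha0.2] at h2
    simp only [mul_zero, zero_add] at h1 h2
    exact hcone v huv (pos_of_mul_pos_right h1 ht) (pos_of_mul_pos_right h2 ht)
  have hnoa' : ∀ u v x, s(u, v) ∈ T → x ∈ segment ℝ u v → 0 < α x → 0 < β x → a ≠ v := by
    intro u v x huv hx
    exact hnoa v u x (by rwa [Sym2.eq_swap]) (by rwa [segment_symm])
  have hA0 : ∀ u v x, s(u, v) ∈ T → x ∈ segment ℝ u v → 0 < α x → 0 < β x → α x + β x < 1 →
      α u + β u ≤ α x + β x → 0 < α u ∧ 0 < β u := by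
    intro u v x huv hx h1 h2 h3 h4
    have na := hnoa u v x huv hx h1 h2
    have na' := hnoa' u v x huv hx h1 h2
    by_contra hcon
    have hcon' : α u ≤ 0 ∨ β u ≤ 0 := by
      by_contra h; push Not at h; exact hcon h
    obtain ⟨t, ht0, ht1, e1, e2, e3⟩ := exit_time _ _ _ _ h1 h2 hcon'
    have hz := seg_left_sub hx (left_mem_segment ℝ u v) ht0.le ht1
    rw [← hα _ _ _ _ (by ring)] at e1 e3
    rw [← hβ _ _ _ _ (by ring)] at e2 e3
    have hf : α ((1 - t) • x + t • u) + β ((1 - t) • x + t • u) < 1 := by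
      rw [hα _ _ _ _ (by ring), hβ _ _ _ _ (by ring)]
      nlinarith
    generalize (1 - t) • x + t • u = z at *
    rcases e3 with e3 | e3
    · have hz2 := hsegac z e3 e2 (by linarith)
      have hne : s(a, c) ≠ s(u, v) := by
        intro h; rcases Sym2.eq_iff.1 h with ⟨h, -⟩ | ⟨h, -⟩
        · exact na h
        · exact na' h
      obtain ⟨h5, h6⟩ := noncross hT hac huv hne hz2 hz
      rcases h5 with rfl | rfl
      · rcases h6 with h6 | h6
        · exact na h6
        · exact na' h6
      · linarith [hc0.2]
    · have hz2 := hsegab z e3 e1 (by linarith)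
      have hne : s(a, b) ≠ s(u, v) := by
        intro h; rcases Sym2.eq_iff.1 h with ⟨h, -⟩ | ⟨h, -⟩
        · exact na h
        · exact na' h
      obtain ⟨h5, h6⟩ := noncross hT hab huv hne hz2 hz
      rcases h5 with rfl | rfl
      · rcases h6 with h6 | h6
        · exact na h6
        · exact na' h6
      · linarith [hb0.1]
  have hA : ∀ u v x, s(u, v) ∈ T → x ∈ segment ℝ u v → 0 < α x → 0 < β x → α x + β x < 1 →
      ∃ w ∈ P, Proper T w ∧ 0 < α w ∧ 0 < β w ∧ α w + β w ≤ α x + β x := by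
    intro u v x huv hx h1 h2 h3
    obtain ⟨huP, hvP, -⟩ := mem_tri_edge hT huv
    by_cases h4 : α u + β u ≤ α x + β x
    · obtain ⟨h5, h6⟩ := hA0 u v x huv hx h1 h2 h3 h4
      exact ⟨u, huP, proper_left hT huv, h5, h6, h4⟩
    · have h4' : α v + β v ≤ α x + β x := by
        obtain ⟨s, t, hs, ht, hst, rfl⟩ := hx
        rw [hα _ _ _ _ hst, hβ _ _ _ _ hst] at *
        by_contra h7
        push Not at h4 h7
        have := cvx_lt hs ht hst h4 h7
        linarith
      obtain ⟨h5, h6⟩ := hA0 v u x (by rwa [Sym2.eq_swap]) (by rwa [segment_symm]) h1 h2 h3 h4'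
      exact ⟨v, hvP, proper_right hT huv, h5, h6, h4'⟩
  have hS : ∀ d ∈ P, Proper T d → 0 < α d → 0 < β d → α d + β d ≤ 1 → False := by
    classical
    intro d0 h1 h2 h3 h4 h5
    obtain ⟨d, hd, hdmin⟩ := Finset.exists_min_image
      (P.filter (fun d => Proper T d ∧ 0 < α d ∧ 0 < β d ∧ α d + β d ≤ 1))
      (fun d => α d + β d) ⟨d0, Finset.mem_filter.2 ⟨h1, h2, h3, h4, h5⟩⟩
    simp only [Finset.mem_filter] at hd hdmin
    obtain ⟨hdP, hdp, hd1, hd2, hd3⟩ := hd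
    have hda : a ≠ d := by rintro rfl; linarith [ha0.1]
    refine hcone d (maximal hT haP hdP hda ?_) hd1 hd2
    rintro u v x huv hne ⟨s, t, hs, ht, hst, rfl⟩ hx
    rcases eq_or_lt_of_le ht with rfl | ht
    · obtain rfl : s = 1 := by linarith
      simp only [one_smul, zero_smul, add_zero] at hx ⊢
      exact ⟨by simp, endpoint hT hab huv hx⟩
    rcases eq_or_lt_of_le hs with rfl | hs
    · obtain rfl : t = 1 := by linarith
      simp only [one_smul, zero_smul, zero_add] at hx ⊢
      exact ⟨by simp, hdp u v huv hx⟩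
    exfalso
    have e1 : α (s • a + t • d) = t * α d := by rw [hα _ _ _ _ hst, ha0.1]; ring
    have e2 : β (s • a + t • d) = t * β d := by rw [hβ _ _ _ _ hst, ha0.2]; ring
    have hlt : t * α d + t * β d < α d + β d := by nlinarith
    obtain ⟨w, hwP, hwp, hw1, hw2, hw3⟩ := hA u v _ huv hx (by rw [e1]; positivity)
      (by rw [e2]; positivity) (by rw [e1, e2]; linarith)
    rw [e1, e2] at hw3
    have := hdmin w ⟨hwP, hwp, hw1, hw2, by linarith⟩
    linarith
  have hE : ∀ u v x, s(u, v) ∈ T → x ∈ segment ℝ u v → 0 < α x → 0 < β x → α x + β x < 1 →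
      False := by
    intro u v x huv hx h1 h2 h3
    obtain ⟨w, hwP, hwp, hw1, hw2, hw3⟩ := hA u v x huv hx h1 h2 h3
    exact hS w hwP hwp hw1 hw2 (by linarith)
  have hopen : ∀ x ∈ openTriangle a b c, 0 < α x ∧ 0 < β x ∧ α x + β x < 1 := by
    intro x hx
    have hsub : convexHull ℝ ({a, b, c} : Set Pt) ⊆ {y | 0 ≤ α y ∧ 0 ≤ β y ∧ α y + β y ≤ 1} := by
      apply convexHull_min
      · rintro y (rfl | rfl | rfl)
        · simp [ha0]
        · simp [hb0]
        · simp [hc0]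
      · rintro y ⟨h1, h2, h3⟩ z ⟨h4, h5, h6⟩ s t hs ht hst
        simp only [Set.mem_ofPred_eq]
        rw [hα _ _ _ _ hst, hβ _ _ _ _ hst]
        refine ⟨by positivity, by positivity, ?_⟩
        obtain rfl : s = 1 - t := by linarith
        nlinarith
    have mv : ∀ r s : ℝ, α (x + (r • (b - a) + s • (c - a))) = α x + r ∧
        β (x + (r • (b - a) + s • (c - a))) = β x + s := by
      intro r s
      have : x + (r • (b - a) + s • (c - a)) = a + (α x + r) • (b - a) + (β x + s) • (c - a) := by
        conv_lhs => rw [hrec x]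
        module
      rw [this]; exact huniq _ _
    refine ⟨?_, ?_, ?_⟩
    · obtain ⟨ε, hε, h⟩ := interior_move hx (-(b - a))
      have := (hsub h).1
      have e := (mv (-ε) 0).1
      simp only [zero_smul, add_zero, neg_smul] at e
      rw [smul_neg, e] at this
      linarith
    · obtain ⟨ε, hε, h⟩ := interior_move hx (-(c - a))
      have := (hsub h).2.1
      have e := (mv 0 (-ε)).2
      simp only [zero_smul, zero_add, neg_smul] at e
      rw [smul_neg, e] at this
      linarith
    · obtain ⟨ε, hε, h⟩ := interior_move hx (b - a)
      have := (hsub h).2.2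
      have e := mv ε 0
      simp only [zero_smul, add_zero] at e
      rw [e.1, e.2] at this
      linarith
  have hnebc : b ≠ c := by rintro rfl; linarith [hb0.1, hc0.1]
  have hbc : s(b, c) ∈ T := by
    apply maximal hT hbP hcP hnebc
    rintro u v x huv hne ⟨s, t, hs, ht, hst, rfl⟩ hx
    rcases eq_or_lt_of_le ht with rfl | ht
    · obtain rfl : s = 1 := by linarith
      simp only [one_smul, zero_smul, add_zero] at hx ⊢
      exact ⟨by simp, proper_right hT hab u v huv hx⟩
    rcases eq_or_lt_of_le hs with rfl | hs
    · obtain rfl : t = 1 := by linarith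
      simp only [one_smul, zero_smul, zero_add] at hx ⊢
      exact ⟨by simp, proper_right hT hac u v huv hx⟩
    exfalso
    have e1 : α (s • b + t • c) = s := by rw [hα _ _ _ _ hst, hb0.1, hc0.1]; ring
    have e2 : β (s • b + t • c) = t := by rw [hβ _ _ _ _ hst, hb0.2, hc0.2]; ring
    generalize s • b + t • c = x at *
    have hge : ∀ u v, s(u, v) ∈ T → x ∈ segment ℝ u v → 1 ≤ α u + β u := by
      intro u v huv hx
      by_contra hlt
      push Not at hlt
      have : ∃ ε : ℝ, 0 < ε ∧ ε ≤ 1 ∧ 0 < (1 - ε) * s + ε * α u ∧ 0 < (1 - ε) * t + ε * β u := by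
        obtain ⟨ε, hε, he⟩ : ∃ ε : ℝ, 0 < ε ∧ ε * (1 + |s - α u| / s + |t - β u| / t) < 1 := by
          have hpos : 0 < 1 + |s - α u| / s + |t - β u| / t := by positivity
          refine ⟨1 / (2 * (1 + |s - α u| / s + |t - β u| / t)), by positivity, ?_⟩
          rw [div_mul_eq_mul_div, div_lt_one (by positivity)]; linarith
        have p1 : 0 ≤ |s - α u| / s := by positivity
        have p2 : 0 ≤ |t - β u| / t := by positivity
        have q1 : |s - α u| = |s - α u| / s * s := by field_simp
        have q2 : |t - β u| = |t - β u| / t * t := by field_simp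
        have r1 := le_abs_self (s - α u)
        have r2 := le_abs_self (t - β u)
        have m1 : ε * (|s - α u| / s) < 1 := by nlinarith [mul_nonneg hε.le p2]
        have m2 : ε * (|t - β u| / t) < 1 := by nlinarith [mul_nonneg hε.le p1]
        refine ⟨ε, hε, ?_, ?_, ?_⟩
        · nlinarith [mul_nonneg hε.le p2, mul_nonneg hε.le p1]
        · have : ε * (s - α u) ≤ ε * (|s - α u| / s) * s := by
            rw [mul_assoc, ← q1]; exact mul_le_mul_of_nonneg_left r1 hε.le
          nlinarith
        · have : ε * (t - β u) ≤ ε * (|t - β u| / t) * t := by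
            rw [mul_assoc, ← q2]; exact mul_le_mul_of_nonneg_left r2 hε.le
          nlinarith
      obtain ⟨ε, h0, h1, h2, h3⟩ := this
      refine hE u v ((1 - ε) • x + ε • u) huv (seg_left_sub hx (left_mem_segment ℝ u v) h0.le h1)
        ?_ ?_ ?_
      · rw [hα _ _ _ _ (by ring), e1]; exact h2
      · rw [hβ _ _ _ _ (by ring), e2]; exact h3
      · rw [hα _ _ _ _ (by ring), hβ _ _ _ _ (by ring), e1, e2]; nlinarith
    have hmain : ∀ u v, s(u, v) ∈ T → s(u, v) ≠ s(b, c) → x ∈ segment ℝ u v → 0 < α u → False := by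
      intro u v huv hne hx hu
      have hu1 := hge u v huv hx
      have hv1 := hge v u (by rwa [Sym2.eq_swap]) (by rwa [segment_symm])
      obtain ⟨huP, hvP, -⟩ := mem_tri_edge hT huv
      obtain ⟨s', t', hs', ht', hst', hx'⟩ := id hx
      have f1 := hα s' t' u v hst'
      have f2 := hβ s' t' u v hst'
      rw [hx', e1] at f1
      rw [hx', e2] at f2
      have hu2 : s' ≠ 0 → α u + β u = 1 := by
        intro h
        have : 0 < s' := lt_of_le_of_ne hs' h.symm
        nlinarith
      have hv2 : t' ≠ 0 → α v + β v = 1 := by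
        intro h
        have : 0 < t' := lt_of_le_of_ne ht' h.symm
        nlinarith
      have hsx : s' ≠ 0 := by
        rintro rfl
        obtain rfl : t' = 1 := by linarith
        have := hv2 one_ne_zero
        exact hS v hvP (proper_right hT huv) (by linarith) (by linarith) (by linarith)
      have htx : t' ≠ 0 := by
        rintro rfl
        obtain rfl : s' = 1 := by linarith
        have := hu2 one_ne_zero
        exact hS u huP (proper_left hT huv) (by linarith) (by linarith) (by linarith)
      have hs'' : 0 < s' := lt_of_le_of_ne hs' hsx.symm
      have ht'' : 0 < t' := lt_of_le_of_ne ht' htx.symm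
      have hu2 := hu2 hsx
      have hv2 := hv2 htx
      have hbu : β u ≤ 0 := by
        by_contra h
        exact hS u huP (proper_left hT huv) hu (not_le.1 h) hu2.le
      have hbv : 0 < β v := by
        by_contra h
        push Not at h
        nlinarith
      have hav : α v ≤ 0 := by
        by_contra h
        exact hS v hvP (proper_right hT huv) (not_le.1 h) hbv hv2.le
      have hden : 0 < β v - β u := by linarith
      have hbmem : b ∈ segment ℝ u v := by
        refine ⟨β v / (β v - β u), -β u / (β v - β u), by positivity,
          div_nonneg (by linarith) hden.le, by field_simp; ring, ?_⟩
        have hs1 : β v / (β v - β u) + -β u / (β v - β u) = 1 := by field_simp; ring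
        apply hext
        · rw [hα _ _ _ _ hs1, hb0.1]
          rw [show α u = 1 - β u by linarith, show α v = 1 - β v by linarith]
          field_simp; ring
        · rw [hβ _ _ _ _ hs1, hb0.2]; field_simp; ring
      have hden' : 0 < α u - α v := by linarith
      have hcmem : c ∈ segment ℝ u v := by
        refine ⟨-α v / (α u - α v), α u / (α u - α v), div_nonneg (by linarith) hden'.le,
          by positivity, by field_simp; ring, ?_⟩
        have hs1 : -α v / (α u - α v) + α u / (α u - α v) = 1 := by field_simp; ring
        apply hext
        · rw [hα _ _ _ _ hs1, hc0.1]; field_simp; ring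
        · rw [hβ _ _ _ _ hs1, hc0.2]
          rw [show β u = 1 - α u by linarith, show β v = 1 - α v by linarith]
          field_simp; ring
      have k1 := proper_right hT hab u v huv hbmem
      have k2 := proper_right hT hac u v huv hcmem
      apply hne
      rw [Sym2.eq_iff]
      rcases k1 with k1 | k1 <;> rcases k2 with k2 | k2
      · exact absurd (k1.trans k2.symm) hnebc
      · exact Or.inl ⟨k1.symm, k2.symm⟩
      · exact Or.inr ⟨k2.symm, k1.symm⟩
      · exact absurd (k1.trans k2.symm) hnebc
    by_cases hu : 0 < α u
    · exact hmain u v huv hne hx hu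
    · apply hmain v u (by rwa [Sym2.eq_swap]) (by rwa [Sym2.eq_swap]) (by rwa [segment_symm])
      obtain ⟨s', t', hs', ht', hst', rfl⟩ := hx
      rw [hα _ _ _ _ hst'] at e1
      by_contra h
      push Not at h hu
      nlinarith
  have hE' : ∀ u v : Pt, s(u, v) ∈ T → ∀ x ∈ segment ℝ u v, x ∉ openTriangle a b c := by
    intro u v huv x hx hxo
    obtain ⟨h1, h2, h3⟩ := hopen x hxo
    exact hE u v x huv hx h1 h2 h3
  refine ⟨haP, hbP, hcP, hneab, hnebc, hneac, hab, hbc, hac, ?_, hE'⟩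
  intro p hp hpo
  obtain ⟨h1, h2, h3⟩ := hopen p hpo
  by_cases hpp : Proper T p
  · exact hS p hp hpp h1 h2 h3.le
  · unfold Proper at hpp
    push Not at hpp
    obtain ⟨u, v, huv, hx, -⟩ := hpp
    exact hE' u v huv p hx hpo

theorem det_zero {a x u : Pt} (hax : a ≠ x) (hD : det2 (x - a) (u - a) = 0) :
    ∃ r : ℝ, u = a + r • (x - a) := by
  have hX : (x - a).1 ≠ 0 ∨ (x - a).2 ≠ 0 := by
    by_contra h
    push Not at h
    apply hax
    have h1 := h.1
    have h2 := h.2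
    simp only [Prod.fst_sub, Prod.snd_sub] at h1 h2
    ext <;> linarith
  simp only [det2, Prod.fst_sub, Prod.snd_sub] at hD hX
  rcases hX with hX | hX
  · refine ⟨(u.1 - a.1) / (x.1 - a.1), ?_⟩
    ext
    · simp only [Prod.fst_add, Prod.smul_fst, Prod.fst_sub, smul_eq_mul]
      rw [div_mul_cancel₀ _ hX]; ring
    · simp only [Prod.snd_add, Prod.smul_snd, Prod.snd_sub, smul_eq_mul]
      rw [div_mul_eq_mul_div, ← sub_eq_iff_eq_add', eq_div_iff hX]; linarith
  · refine ⟨(u.2 - a.2) / (x.2 - a.2), ?_⟩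
    ext
    · simp only [Prod.fst_add, Prod.smul_fst, Prod.fst_sub, smul_eq_mul]
      rw [div_mul_eq_mul_div, ← sub_eq_iff_eq_add', eq_div_iff hX]; linarith
    · simp only [Prod.snd_add, Prod.smul_snd, Prod.snd_sub, smul_eq_mul]
      rw [div_mul_cancel₀ _ hX]; ring

set_option maxHeartbeats 1000000 in
theorem exists_left {P : Finset Pt} {T : Set (Sym2 Pt)} (hT : IsTriangulation P T) {a b p : Pt}
    (hab : s(a, b) ∈ T) (hp : p ∈ P) (hg : 0 < det2 (b - a) (p - a)) :
    ∃ v, s(a, v) ∈ T ∧ 0 < det2 (b - a) (v - a) := by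
  obtain ⟨haP, hbP, hneab⟩ := mem_tri_edge hT hab
  by_contra hno
  push Not at hno
  obtain ⟨g, hgd⟩ : ∃ g : Pt → ℝ, ∀ y, g y = det2 (b - a) (y - a) := ⟨_, fun _ => rfl⟩
  simp only [← hgd] at hno hg
  have hga : ∀ (s t : ℝ) (y w : Pt), s + t = 1 → g (s • y + t • w) = s * g y + t * g w := by
    intro t s y w h
    obtain rfl : t = 1 - s := by linarith
    simp only [hgd, det2, Prod.fst_sub, Prod.snd_sub, Prod.smul_fst, Prod.smul_snd, Prod.fst_add,
      Prod.snd_add, smul_eq_mul]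
    ring
  have hg0 : g a = 0 := by simp [hgd, det2]
  have hnoa : ∀ u v x, s(u, v) ∈ T → x ∈ segment ℝ u v → 0 < g x → a ≠ u := by
    rintro u v x huv ⟨s, t, hs, ht, hst, rfl⟩ h1 rfl
    rw [hga _ _ _ _ hst, hg0] at h1
    have := hno v huv
    nlinarith
  have hnoa' : ∀ u v x, s(u, v) ∈ T → x ∈ segment ℝ u v → 0 < g x → a ≠ v := by
    intro u v x huv hx
    exact hnoa v u x (by rwa [Sym2.eq_swap]) (by rwa [segment_symm])
  have hane : a ≠ p := by rintro rfl; linarith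
  let E : Set (Pt × Pt) := {e | s(e.1, e.2) ∈ T ∧ a ≠ e.1 ∧ a ≠ e.2}
  have hEfin : E.Finite := by
    apply ((P ×ˢ P).finite_toSet).subset
    rintro ⟨u, v⟩ ⟨h, -⟩
    obtain ⟨h1, h2, -⟩ := mem_tri_edge hT h
    simp [h1, h2]
  let F : ℝ → Pt := fun t => (1 - t) • a + t • p
  have hFc : Continuous F := by fun_prop
  let K : Set ℝ := Set.Icc 0 1 ∩ F ⁻¹' (⋃ e ∈ E, segment ℝ e.1 e.2)
  have hKc : IsCompact K := by
    apply isCompact_Icc.inter_right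
    apply IsClosed.preimage hFc
    apply hEfin.isClosed_biUnion
    intro e _
    rw [← convexHull_pair (𝕜 := ℝ)]
    exact Set.Finite.isClosed_convexHull ℝ (Set.toFinite _)
  have hKmem : ∀ t u v, 0 ≤ t → t ≤ 1 → s(u, v) ∈ T → a ≠ u → a ≠ v → F t ∈ segment ℝ u v →
      t ∈ K := by
    intro t u v h0 h1 huv hu hv hx
    exact ⟨⟨h0, h1⟩, Set.mem_biUnion (show (u, v) ∈ E from ⟨huv, hu, hv⟩) hx⟩
  have hKne : K.Nonempty := by
    by_contra hemp
    have hap : s(a, p) ∈ T := by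
      apply maximal hT haP hp hane
      rintro u v x huv hne ⟨s, t, hs, ht, hst, rfl⟩ hx
      obtain rfl : s = 1 - t := by linarith
      rcases eq_or_lt_of_le ht with rfl | ht
      · simp only [sub_zero, one_smul, zero_smul, add_zero] at hx ⊢
        exact ⟨by simp, endpoint hT hab huv hx⟩
      exfalso
      have hgx : 0 < g ((1 - t) • a + t • p) := by
        rw [hga _ _ _ _ hst, hg0]; simp only [mul_zero, zero_add]; positivity
      exact hemp ⟨t, hKmem t u v ht.le (by linarith) huv (hnoa u v _ huv hx hgx)
        (hnoa' u v _ huv hx hgx) hx⟩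
    linarith [hno p hap]
  obtain ⟨t, ⟨⟨ht0, ht1⟩, htE⟩, htmin⟩ := hKc.exists_isLeast hKne
  simp only [Set.mem_preimage, Set.mem_iUnion] at htE
  obtain ⟨⟨u0, v0⟩, ⟨huv0, hau0, hav0⟩, hx0⟩ := htE
  simp only at huv0 hau0 hav0 hx0
  have htpos : 0 < t := by
    rcases eq_or_lt_of_le ht0 with rfl | h
    · exfalso
      have : F 0 = a := by simp [F]
      rw [this] at hx0
      rcases endpoint hT hab huv0 hx0 with h | h
      · exact hau0 h
      · exact hav0 h
    · exact h
  obtain ⟨x, hxF⟩ : ∃ x, x = F t := ⟨_, rfl⟩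
  rw [← hxF] at hx0
  have hgx : 0 < g x := by
    rw [hxF, hga _ _ _ _ (by ring), hg0]; simp only [mul_zero, zero_add]; positivity
  have hfree : ∀ (r : ℝ) u v, 0 ≤ r → r < 1 → s(u, v) ∈ T → a ≠ u → a ≠ v →
      a + r • (x - a) ∈ segment ℝ u v → False := by
    intro r u v hr0 hr1 huv hu hv hm
    have e : a + r • (x - a) = F (r * t) := by
      rw [hxF]; simp only [F]; module
    rw [e] at hm
    have := htmin (hKmem (r * t) u v (by positivity) (by nlinarith) huv hu hv hm)
    nlinarith
  obtain ⟨u, v, huv, hau, hav, hx, hgu⟩ : ∃ u v, s(u, v) ∈ T ∧ a ≠ u ∧ a ≠ v ∧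
      x ∈ segment ℝ u v ∧ 0 < g u := by
    by_cases h : 0 < g u0
    · exact ⟨u0, v0, huv0, hau0, hav0, hx0, h⟩
    · refine ⟨v0, u0, by rwa [Sym2.eq_swap], hav0, hau0, by rwa [segment_symm], ?_⟩
      obtain ⟨s, t, hs, ht, hst, rfl⟩ := hx0
      rw [hga _ _ _ _ hst] at hgx
      by_contra h'
      push Not at h h'
      nlinarith
  clear hx0 huv0 hau0 hav0
  have hax : a ≠ x := by rintro rfl; linarith
  have hxend : ∀ w, s(x, w) ∈ T → False := by
    intro w hw
    obtain ⟨hxP, -, -⟩ := mem_tri_edge hT hw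
    have : s(a, x) ∈ T := by
      apply maximal hT haP hxP hax
      rintro u' v' y huv' hne ⟨s, r, hs, hr, hsr, rfl⟩ hy
      obtain rfl : s = 1 - r := by linarith
      rcases eq_or_lt_of_le hr with rfl | hr
      · simp only [sub_zero, one_smul, zero_smul, add_zero] at hy ⊢
        exact ⟨by simp, endpoint hT hab huv' hy⟩
      rcases eq_or_lt_of_le hs with h | hs
      · obtain rfl : r = 1 := by linarith
        simp only [sub_self, one_smul, zero_smul, zero_add] at hy ⊢
        exact ⟨by simp, endpoint hT hw huv' hy⟩
      exfalso
      have hgy : 0 < g ((1 - r) • a + r • x) := by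
        rw [hga _ _ _ _ hsr, hg0]; simp only [mul_zero, zero_add]; positivity
      refine hfree r u' v' hr.le (by linarith) huv' (hnoa _ _ _ huv' hy hgy)
        (hnoa' _ _ _ huv' hy hgy) ?_
      convert hy using 1
      module
    linarith [hno x this]
  have hxu : x ≠ u := by rintro rfl; exact hxend _ huv
  have hxv : x ≠ v := by rintro rfl; exact hxend u (by rwa [Sym2.eq_swap])
  obtain ⟨m, n, hm, hn, hmn, hxmn⟩ := id hx
  have hm' : 0 < m := by
    rcases eq_or_lt_of_le hm with rfl | h
    · obtain rfl : n = 1 := by linarith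
      exact absurd (by simpa using hxmn.symm) hxv
    · exact h
  have hn' : 0 < n := by
    rcases eq_or_lt_of_le hn with rfl | h
    · obtain rfl : m = 1 := by linarith
      exact absurd (by simpa using hxmn.symm) hxu
    · exact h
  have hDne : det2 (x - a) (u - a) ≠ 0 := by
    intro hD
    obtain ⟨r, hr⟩ : ∃ r : ℝ, u = a + r • (x - a) := det_zero hax hD
    have hrpos : 0 < r := by
      have : g u = r * g x := by
        rw [hr, show a + r • (x - a) = (1 - r) • a + r • x by module, hga _ _ _ _ (by ring), hg0]
        ring
      rw [this] at hgu
      exact pos_of_mul_pos_left hgu hgx.le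
    have hr1 : 1 < r := by
      rcases lt_trichotomy r 1 with h | h | h
      · exact (hfree r u v hrpos.le h huv hau hav (hr ▸ left_mem_segment ℝ u v)).elim
      · subst h
        exact (hxu (by rw [hr]; module)).elim
      · exact h
    obtain ⟨k, hk⟩ : ∃ k : ℝ, k = (1 - m * r) / n := ⟨_, rfl⟩
    have hv : v = a + k • (x - a) := by
      have h1 : n • v = x - m • u := by rw [← hxmn]; module
      have h2 : v = n⁻¹ • (x - m • u) := by rw [← h1, smul_smul, inv_mul_cancel₀ hn'.ne', one_smul]
      rw [h2, hr, hk]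
      obtain rfl : m = 1 - n := by linarith
      ext
      · simp only [Prod.fst_add, Prod.smul_fst, Prod.fst_sub, smul_eq_mul]
        field_simp; ring
      · simp only [Prod.snd_add, Prod.smul_snd, Prod.snd_sub, smul_eq_mul]
        field_simp; ring
    have hk1 : k < 1 := by
      rw [hk, div_lt_one hn']; nlinarith
    rcases le_or_gt 0 k with hk0 | hk0
    · exact hfree k u v hk0 hk1 huv hau hav (hv ▸ right_mem_segment ℝ u v)
    · have hrk : 0 < r - k := by linarith
      have : a ∈ segment ℝ u v := by
        refine ⟨-k / (r - k), r / (r - k), div_nonneg (by linarith) hrk.le, by positivity,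
          by field_simp; ring, ?_⟩
        rw [hr, hv]
        ext
        · simp only [Prod.fst_add, Prod.smul_fst, Prod.fst_sub, smul_eq_mul]
          field_simp; ring
        · simp only [Prod.snd_add, Prod.smul_snd, Prod.snd_sub, smul_eq_mul]
          field_simp; ring
      rcases endpoint hT hab huv this with h | h
      · exact hau h
      · exact hav h
  obtain ⟨α, β, hrec, huniq, hα, hβ, -, -⟩ := exists_coords a (x - a) (u - a) hDne
  have ha0 : α a = 0 ∧ β a = 0 := by simpa using huniq 0 0
  have hx1 : α x = 1 ∧ β x = 0 := by simpa using huniq 1 0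
  have hu1 : α u = 0 ∧ β u = 1 := by simpa using huniq 0 1
  have hext : ∀ y z, α y = α z → β y = β z → y = z := by
    intro y z h1 h2
    rw [hrec y, hrec z, h1, h2]
  have hgc : ∀ y, g y = α y * g x + β y * g u := by
    intro y
    have e : g (a + α y • (x - a) + β y • (u - a)) = α y * g x + β y * g u := by
      simp only [hgd, det2, Prod.fst_sub, Prod.snd_sub, Prod.smul_fst, Prod.smul_snd, Prod.fst_add,
        Prod.snd_add, smul_eq_mul]
      ring
    rwa [← hrec y] at e
  have hv1 : α v + β v = 1 ∧ β v < 0 := by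
    have f1 := hα m n u v hmn
    have f2 := hβ m n u v hmn
    rw [hxmn, hx1.1, hu1.1] at f1
    rw [hxmn, hx1.2, hu1.2] at f2
    constructor
    · have : n * (α v + β v - 1) = 0 := by linarith
      rcases mul_eq_zero.1 this with h | h <;> linarith
    · by_contra h
      push Not at h
      nlinarith
  classical
  let S : Finset Pt := P.filter (fun d => Proper T d ∧ 0 ≤ α d ∧ 0 < β d ∧ α d + β d ≤ 1)
  have hSmem : ∀ d, d ∈ S ↔ d ∈ P ∧ Proper T d ∧ 0 ≤ α d ∧ 0 < β d ∧ α d + β d ≤ 1 :=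
    fun d => Finset.mem_filter
  have huS : u ∈ S := (hSmem u).2 ⟨(mem_tri_edge hT huv).1, proper_left hT huv, by rw [hu1.1],
    by rw [hu1.2]; norm_num, by rw [hu1.1, hu1.2]; norm_num⟩
  obtain ⟨d0, hd0S, hd0⟩ := Finset.exists_max_image S (fun d => α d / β d) ⟨u, huS⟩
  obtain ⟨d, hdS', hdmin⟩ := Finset.exists_min_image (S.filter (fun d => α d0 / β d0 ≤ α d / β d))
    (fun d => α d + β d) ⟨d0, Finset.mem_filter.2 ⟨hd0S, le_rfl⟩⟩
  obtain ⟨hdS, hdd0⟩ := Finset.mem_filter.1 hdS'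
  have hmax : ∀ w ∈ S, α w * β d ≤ α d * β w := by
    intro w hw
    have h1 := (hd0 w hw).trans hdd0
    rwa [div_le_div_iff₀ ((hSmem w).1 hw).2.2.2.1 ((hSmem d).1 hdS).2.2.2.1] at h1
  have htie : ∀ w ∈ S, α w * β d = α d * β w → α d + β d ≤ α w + β w := by
    intro w hw he
    apply hdmin w (Finset.mem_filter.2 ⟨hw, hdd0.trans (le_of_eq ?_)⟩)
    rw [div_eq_div_iff ((hSmem d).1 hdS).2.2.2.1.ne' ((hSmem w).1 hw).2.2.2.1.ne', he]
  obtain ⟨hdP, hdp, hd1, hd2, hd3⟩ := (hSmem d).1 hdS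
  have hgd' : 0 < g d := by rw [hgc d]; positivity
  have had : a ≠ d := by rintro rfl; linarith
  suffices h : s(a, d) ∈ T by linarith [hno d h]
  apply maximal hT haP hdP had
  rintro u' v' y huv' hne ⟨s', s, hs', hs, hss, rfl⟩ hy
  rcases eq_or_lt_of_le hs with rfl | hs
  · obtain rfl : s' = 1 := by linarith
    simp only [one_smul, zero_smul, add_zero] at hy ⊢
    exact ⟨by simp, endpoint hT hab huv' hy⟩
  rcases eq_or_lt_of_le hs' with rfl | hs'
  · obtain rfl : s = 1 := by linarith
    simp only [one_smul, zero_smul, zero_add] at hy ⊢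
    exact ⟨by simp, hdp u' v' huv' hy⟩
  exfalso
  have e1 : α (s' • a + s • d) = s * α d := by rw [hα _ _ _ _ hss, ha0.1]; ring
  have e2 : β (s' • a + s • d) = s * β d := by rw [hβ _ _ _ _ hss, ha0.2]; ring
  have hgy : 0 < g (s' • a + s • d) := by
    rw [hga _ _ _ _ hss, hg0]; simp only [mul_zero, zero_add]; positivity
  have hs1 : s < 1 := by linarith
  generalize s' • a + s • d = y at *
  have hyβ : 0 < β y := by rw [e2]; positivity
  have hyf : α y + β y < 1 := by rw [e1, e2]; nlinarith
  have hau' := hnoa u' v' y huv' hy hgy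
  have hav' := hnoa' u' v' y huv' hy hgy
  have hane' : ∀ w, s(a, w) ≠ s(u', v') := by
    intro w h; rcases Sym2.eq_iff.1 h with ⟨h, -⟩ | ⟨h, -⟩
    · exact hau' h
    · exact hav' h
  have huvne : s(u, v) ≠ s(u', v') := by
    intro h
    have hy2 : y ∈ segment ℝ u v := by
      rcases Sym2.eq_iff.1 h with ⟨rfl, rfl⟩ | ⟨rfl, rfl⟩
      · exact hy
      · rwa [segment_symm]
    obtain ⟨i, j, hi, hj, hij, rfl⟩ := hy2
    rw [hα _ _ _ _ hij, hβ _ _ _ _ hij, hu1.1, hu1.2] at hyf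
    have : j * (α v + β v) = j := by rw [hv1.1, mul_one]
    linarith
  have hstrict : ∀ w, w ∈ P → Proper T w → w ∈ segment ℝ u' v' → β w * α d - α w * β d < 0 →
      False := by
    intro w hwP hwp hw hL
    by_cases hR : 0 < β w ∧ α w + β w ≤ 1
    · have hαw : 0 ≤ α w := by
        by_contra h
        push Not at h
        nlinarith [mul_nonneg hR.1.le hd1]
      have := hmax w ((hSmem w).2 ⟨hwP, hwp, hαw, hR.1, hR.2⟩)
      linarith
    have hR' : β w ≤ 0 ∨ 1 - (α w + β w) ≤ 0 := by
      by_contra h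
      push Not at h
      exact hR ⟨h.1, by linarith⟩
    obtain ⟨τ, hτ0, hτ1, c1, c2, c3⟩ := exit_time _ _ (1 - (α y + β y)) _ hyβ (by linarith) hR'
    have hz := seg_left_sub hy hw hτ0.le hτ1
    have z1 := hα (1 - τ) τ y w (by ring)
    have z2 := hβ (1 - τ) τ y w (by ring)
    have hLz : β ((1 - τ) • y + τ • w) * α d - α ((1 - τ) • y + τ • w) * β d < 0 := by
      rw [z1, z2, e1, e2]
      nlinarith
    rw [← z2] at c1 c3
    rw [show (1 - τ) * (1 - (α y + β y)) + τ * (1 - (α w + β w)) =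
      1 - (α ((1 - τ) • y + τ • w) + β ((1 - τ) • y + τ • w)) by rw [z1, z2]; ring] at c2 c3
    clear z1 z2
    generalize (1 - τ) • y + τ • w = z at *
    have hαz : 0 ≤ α z := by
      by_contra h
      push Not at h
      nlinarith [mul_nonneg c1 hd1]
    rcases c3 with c3 | c3
    · rcases lt_or_eq_of_le (show α z ≤ 1 by linarith) with h | h
      · refine hfree (α z) u' v' hαz h huv' hau' hav' ?_
        have := hrec z
        rw [c3, zero_smul, add_zero] at this
        rwa [← this]
      · have : z = x := hext _ _ (by rw [h, hx1.1]) (by rw [c3, hx1.2])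
        subst this
        rcases (noncross hT huv huv' huvne hx hz).1 with h | h
        · exact hxu h
        · exact hxv h
    · have hzs : z ∈ segment ℝ x u := by
        refine ⟨α z, β z, hαz, c1, by linarith, ?_⟩
        have hs1 : α z + β z = 1 := by linarith
        apply hext
        · rw [hα _ _ _ _ hs1, hx1.1, hu1.1]; ring
        · rw [hβ _ _ _ _ hs1, hx1.2, hu1.2]; ring
      have hzs' : z ∈ segment ℝ u v :=
        (convex_segment u v).segment_subset hx (left_mem_segment ℝ u v) hzs
      rcases (noncross hT huv huv' huvne hzs' hz).1 with h | h
      · rw [h, hu1.1, hu1.2] at hLz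
        linarith
      · rw [h] at c1
        linarith [hv1.2]
  have hray : ∀ w, w ∈ P → Proper T w → w ∈ segment ℝ u' v' → β w * α d - α w * β d = 0 →
      α w + β w ≤ α y + β y → False := by
    intro w hwP hwp hw hL hf
    have hαw : α w = β w / β d * α d := by field_simp; linarith
    rcases lt_or_ge 0 (β w) with h | h
    · have hα0 : 0 ≤ α w := by rw [hαw]; positivity
      have := htie w ((hSmem w).2 ⟨hwP, hwp, hα0, h, by linarith⟩) (by linarith)
      rw [e1, e2] at hf
      nlinarith
    · have hden : 0 < β y - β w := by linarith
      have : a ∈ segment ℝ u' v' := by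
        have h1 : 1 - -β w / (β y - β w) = β y / (β y - β w) := by field_simp; ring
        have h2 : 0 ≤ β y / (β y - β w) := by positivity
        have hts : -β w / (β y - β w) + β y / (β y - β w) = 1 := by rw [← h1]; ring
        have := (convex_segment u' v') hy hw (div_nonneg (by linarith) hden.le) h2 hts
        convert this using 1
        apply hext
        · rw [hα _ _ _ _ hts, ha0.1, hαw, e1, e2]
          have : s * β d - β w ≠ 0 := by rw [← e2]; exact hden.ne'
          field_simp; ring
        · rw [hβ _ _ _ _ hts, ha0.2]; field_simp; ring
      rcases endpoint hT hab huv' this with h | h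
      · exact hau' h
      · exact hav' h
  obtain ⟨hu'P, hv'P, -⟩ := mem_tri_edge hT huv'
  have pu := proper_left hT huv'
  have pv := proper_right hT huv'
  have hL1 : 0 ≤ β u' * α d - α u' * β d := by
    by_contra h
    exact hstrict u' hu'P pu (left_mem_segment ℝ _ _) (not_le.1 h)
  have hL2 : 0 ≤ β v' * α d - α v' * β d := by
    by_contra h
    exact hstrict v' hv'P pv (right_mem_segment ℝ _ _) (not_le.1 h)
  obtain ⟨i, j, hi, hj, hij, hyij⟩ := id hy
  have f1 := hα i j u' v' hij
  have f2 := hβ i j u' v' hij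
  rw [hyij] at f1 f2
  have hL : i * (β u' * α d - α u' * β d) + j * (β v' * α d - α v' * β d) = 0 := by
    have : β y * α d - α y * β d = 0 := by rw [e1, e2]; ring
    rw [f1, f2] at this
    linarith
  have k1 : i * (β u' * α d - α u' * β d) = 0 := by
    have := mul_nonneg hi hL1
    have := mul_nonneg hj hL2
    linarith
  have k2 : j * (β v' * α d - α v' * β d) = 0 := by linarith
  rcases mul_eq_zero.1 k1 with hi0 | k1
  · subst hi0
    obtain rfl : j = 1 := by linarith
    exact hray v' hv'P pv (right_mem_segment ℝ _ _) (by linarith) (by linarith)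
  rcases mul_eq_zero.1 k2 with hj0 | k2
  · subst hj0
    obtain rfl : i = 1 := by linarith
    exact hray u' hu'P pu (left_mem_segment ℝ _ _) (by linarith) (by linarith)
  by_cases hfu : α u' + β u' ≤ α y + β y
  · exact hray u' hu'P pu (left_mem_segment ℝ _ _) k1 hfu
  · apply hray v' hv'P pv (right_mem_segment ℝ _ _) k2
    by_contra hfv
    push Not at hfu hfv
    have := cvx_lt hi hj hij hfu hfv
    linarith

theorem IsTriangleOf.swap {P : Finset Pt} {T : Set (Sym2 Pt)} {a b c : Pt}
    (h : IsTriangleOf P T a b c) : IsTriangleOf P T b a c := by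
  obtain ⟨h1, h2, h3, h4, h5, h6, h7, h8, h9, h10, h11⟩ := h
  have e : openTriangle b a c = openTriangle a b c := by
    unfold openTriangle
    rw [Set.insert_comm]
  refine ⟨h2, h1, h3, h4.symm, h6, h5, ?_, h9, h8, ?_, ?_⟩
  · rwa [Sym2.eq_swap]
  · rwa [e]
  · rwa [e]

theorem key_left {P : Finset Pt} {T : Set (Sym2 Pt)} (hT : IsTriangulation P T) {a b p : Pt}
    (hab : s(a, b) ∈ T) (hp : p ∈ P) (hg : 0 < det2 (b - a) (p - a)) :
    ∃ c, IsTriangleOf P T b a c ∧ Clockwise b a c := by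
  classical
  obtain ⟨v, hv, hgv⟩ := exists_left hT hab hp hg
  obtain ⟨c, hc, hmax⟩ := Finset.exists_max_image
    (P.filter (fun v => s(a, v) ∈ T ∧ 0 < det2 (b - a) (v - a)))
    (fun v => det2 (v - a) (p - a) / det2 (b - a) (v - a))
    ⟨v, Finset.mem_filter.2 ⟨(mem_tri_edge hT hv).2.1, hv, hgv⟩⟩
  obtain ⟨hcP, hac, hgc⟩ := Finset.mem_filter.1 hc
  refine ⟨c, (step2 hT hab hac hgc ?_).swap, ?_⟩
  · intro w hw hgw hcon
    have h := hmax w (Finset.mem_filter.2 ⟨(mem_tri_edge hT hw).2.1, hw, hgw⟩)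
    rw [div_le_div_iff₀ hgw hgc] at h
    have id1 : det2 (w - a) (c - a) * det2 (b - a) (p - a) =
        det2 (w - a) (p - a) * det2 (b - a) (c - a) -
        det2 (c - a) (p - a) * det2 (b - a) (w - a) := by
      simp only [det2]; ring
    have := mul_pos hcon hg
    linarith
  · have : det2 (a - b) (c - b) = - det2 (b - a) (c - a) := by
      simp only [det2, Prod.fst_sub, Prod.snd_sub]; ring
    unfold Clockwise
    linarith

theorem edge_tri {P : Finset Pt} {T : Set (Sym2 Pt)} (hT : IsTriangulation P T)
    (hP : ¬ Collinear ℝ (P : Set Pt)) {a b : Pt} (hab : s(a, b) ∈ T) :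
    ∃ c, (IsTriangleOf P T a b c ∧ Clockwise a b c) ∨ (IsTriangleOf P T b a c ∧ Clockwise b a c) := by
  obtain ⟨haP, hbP, hne⟩ := mem_tri_edge hT hab
  have : ∃ p ∈ P, det2 (b - a) (p - a) ≠ 0 := by
    by_contra h
    push Not at h
    apply hP
    rw [collinear_iff_of_mem (p₀ := a) (by exact_mod_cast haP)]
    refine ⟨b - a, fun p hp => ?_⟩
    obtain ⟨r, hr⟩ := det_zero hne (h p (by exact_mod_cast hp))
    exact ⟨r, by rw [hr, vadd_eq_add, add_comm]⟩
  obtain ⟨p, hp, h⟩ := this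
  rcases lt_or_gt_of_ne h with h | h
  · have hba : s(b, a) ∈ T := by rwa [Sym2.eq_swap]
    obtain ⟨c, hc⟩ := key_left hT hba hp (by
      have : det2 (a - b) (p - b) = - det2 (b - a) (p - a) := by
        simp only [det2, Prod.fst_sub, Prod.snd_sub]; ring
      linarith)
    exact ⟨c, Or.inl hc⟩
  · obtain ⟨c, hc⟩ := key_left hT hab hp h
    exact ⟨c, Or.inr hc⟩

theorem edge_iff (P Q : Finset Pt)
    (hP : ¬ Collinear ℝ (P : Set Pt)) (hQ : ¬ Collinear ℝ (Q : Set Pt))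
    (TP TQ : Set (Sym2 Pt)) (hTP : IsTriangulation P TP) (hTQ : IsTriangulation Q TQ)
    (φ : Pt → Pt) (hcomp : CompatibleVia P Q TP TQ φ) (p q : Pt) (hp : p ∈ P) (hq : q ∈ P) :
    s(p, q) ∈ TP ↔ s(φ p, φ q) ∈ TQ := by
  obtain ⟨hbij, hc⟩ := hcomp
  constructor
  · intro h
    obtain ⟨c, h | h⟩ := edge_tri hTP hP h
    · exact ((hc p q c hp hq h.1.2.2.1).1 h).1.2.2.2.2.2.2.1
    · have := ((hc q p c hq hp h.1.2.2.1).1 h).1.2.2.2.2.2.2.1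
      rwa [Sym2.eq_swap]
  · intro h
    obtain ⟨c', h | h⟩ := edge_tri hTQ hQ h
    · obtain ⟨c, hcP, rfl⟩ := hbij.surjOn h.1.2.2.1
      exact ((hc p q c hp hq hcP).2 h).1.2.2.2.2.2.2.1
    · obtain ⟨c, hcP, rfl⟩ := hbij.surjOn h.1.2.2.1
      have := ((hc q p c hq hp hcP).2 h).1.2.2.2.2.2.2.1
      rwa [Sym2.eq_swap]

/-- Compatible triangulations preserve degrees. -/
theorem stmt8 (P Q : Finset Pt)
    (hP : ¬ Collinear ℝ (P : Set Pt)) (hQ : ¬ Collinear ℝ (Q : Set Pt))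
    (TP TQ : Set (Sym2 Pt)) (hTP : IsTriangulation P TP) (hTQ : IsTriangulation Q TQ)
    (φ : Pt → Pt) (hcomp : CompatibleVia P Q TP TQ φ) :
    ∀ p ∈ P, degreeIn TP p = degreeIn TQ (φ p) := by
  intro p hp
  have hiff := edge_iff P Q hP hQ TP TQ hTP hTQ φ hcomp
  obtain ⟨hbij, -⟩ := hcomp
  have himg : {e ∈ TQ | φ p ∈ e} = Sym2.map φ '' {e ∈ TP | p ∈ e} := by
    ext e
    constructor
    · rintro ⟨he, y, rfl⟩
      obtain ⟨-, hyQ, -⟩ := mem_tri_edge hTQ he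
      obtain ⟨q, hq, rfl⟩ := hbij.surjOn hyQ
      exact ⟨s(p, q), ⟨(hiff p q hp hq).2 he, Sym2.mem_mk_left _ _⟩, by simp⟩
    · rintro ⟨e, ⟨he, q, rfl⟩, rfl⟩
      obtain ⟨-, hq, -⟩ := mem_tri_edge hTP he
      exact ⟨by simpa using (hiff p q hp hq).1 he, by simp⟩
  unfold degreeIn
  rw [himg, Set.InjOn.ncard_image]
  rintro e ⟨he, q, rfl⟩ e' ⟨he', q', rfl⟩ h
  obtain ⟨-, hq, -⟩ := mem_tri_edge hTP he
  obtain ⟨-, hq', -⟩ := mem_tri_edge hTP he'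
  simp only [Sym2.map_mk, Sym2.eq_iff] at h
  have : q = q' := by
    rcases h with ⟨-, h⟩ | ⟨h1, h2⟩
    · exact hbij.injOn hq hq' h
    · exact (hbij.injOn hq hp h2).trans (hbij.injOn hp hq' h1)
  rw [this]
end
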